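/- (Łojasiewicz inequality I) Let M = (M_0, M_1, M_2, …) be an increasing sequence of positive real numbers with M_0 = 1 that is logarithmically convex, satisfies ∑_{k≥0} M_k/((k+1)M_{k+1}) = ∞, and satisfies sup_{j≥1} (M_{j+1}/M_j)^{1/j} < ∞. Let U ⊆ ℝ^N be a connected open set and let f, g ∈ C^ℝ_M(U). If K ⊆ U is compact and there is a neighborhood of K on which {x : g(x) = 0} ⊆ {x : f(x) = 0}, then there exist a constant C > 0, a positive rational α, and an open neighborhood W of K in U such that |g(x)| ≥ C·|f(x)|^α for all x ∈ W. -/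

import Mathlib

/-- The `i`-th partial derivative of a function on Euclidean space. -/
noncomputable def pd {ι : Type} [Fintype ι] [DecidableEq ι] {W : Type} [NormedAddCommGroup W]
    [NormedSpace ℝ W] (i : ι) (f : EuclideanSpace ℝ ι → W) : EuclideanSpace ℝ ι → W :=
  fun x => fderiv ℝ f x (EuclideanSpace.single i 1)

/-- The multi-index derivative `D^α f`. -/
noncomputable def mderiv {ι : Type} [Fintype ι] [DecidableEq ι] {W : Type} [NormedAddCommGroup W]
    [NormedSpace ℝ W] (α : ι → ℕ) (f : EuclideanSpace ℝ ι → W) : EuclideanSpace ℝ ι → W :=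
  (Finset.univ : Finset ι).toList.foldr (fun i g => (pd i)^[α i] g) f

/-- Membership in the real Denjoy-Carleman class `C^ℝ_M(U)`: `f` is `C^∞` on `U` and on every
compact `K ⊆ U` there are `A, B > 0` with `|(1/α!) D^α f(x)| ≤ A B^{|α|} M_{|α|}`. -/
def CRM {ι : Type} [Fintype ι] [DecidableEq ι] (M : ℕ → ℝ)
    (U : Set (EuclideanSpace ℝ ι)) (f : EuclideanSpace ℝ ι → ℝ) : Prop :=
  ContDiffOn ℝ (⊤ : ℕ∞) f U ∧
  ∀ K : Set (EuclideanSpace ℝ ι), K ⊆ U → IsCompact K →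
    ∃ A B : ℝ, 0 < A ∧ 0 < B ∧ ∀ x ∈ K, ∀ α : ι → ℕ,
      (1 / (∏ i, ((α i).factorial : ℝ))) * |mderiv α f x| ≤
        A * B ^ (∑ i, α i) * M (∑ i, α i)



namespace Loj
open Set Filter Topology Metric
open scoped ContDiff Nat

/-- Hypotheses on the weight sequence. -/
structure Wt (M : ℕ → ℝ) : Prop where
  pos : ∀ j, 0 < M j
  mono : Monotone M
  zero : M 0 = 1
  log : ∀ j : ℕ, M (j+1) / M j ≤ M (j+2) / M (j+1)
  qa : ∑' k : ℕ, ENNReal.ofReal (M k / (((k : ℝ) + 1) * M (k+1))) = ⊤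
  der : ∃ C : ℝ, ∀ j : ℕ, 1 ≤ j → (M (j+1) / M j) ^ ((1 : ℝ) / j) ≤ C

variable {M : ℕ → ℝ}

lemma Wt.one_le (h : Wt M) (j : ℕ) : 1 ≤ M j := by
  rw [← h.zero]; exact h.mono (Nat.zero_le _)

lemma Wt.ratio_mono (h : Wt M) : Monotone (fun j => M (j+1) / M j) :=
  monotone_nat_of_le_succ h.log

lemma Wt.mul_le (h : Wt M) (a b : ℕ) : M a * M b ≤ M (a + b) := by
  induction b with
  | zero => simp [h.zero]
  | succ b ih =>
    have h1 := h.ratio_mono (Nat.le_add_left b a)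
    simp only at h1
    rw [div_le_div_iff₀ (h.pos _) (h.pos _)] at h1
    have h2 := h.pos b
    have h3 := h.pos (b+1)
    rw [← add_assoc]
    have : M a * M (b+1) * M b ≤ M (a+b+1) * M b := by nlinarith
    exact le_of_mul_le_mul_right this h2

lemma Wt.der' (h : Wt M) : ∃ C : ℝ, 1 ≤ C ∧ ∀ j, M (j+1) ≤ C^(j+1) * M j := by
  obtain ⟨C, hC⟩ := h.der
  refine ⟨max (max C 1) (M 1), le_trans (le_max_right _ _) (le_max_left _ _), fun j => ?_⟩
  set D := max (max C 1) (M 1) with hD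
  have hD1 : 1 ≤ D := le_trans (le_max_right _ _) (le_max_left _ _)
  rcases Nat.eq_zero_or_pos j with rfl | hj
  · simp [h.zero, hD]
  · have h1 := hC j hj
    have h0 : 0 ≤ M (j+1) / M j := (div_pos (h.pos _) (h.pos _)).le
    have h2 : M (j+1) / M j ≤ D ^ j := by
      have h3 : (M (j+1) / M j) ^ ((1 : ℝ) / j) ≤ D := h1.trans (le_trans (le_max_left _ _) (le_max_left _ _))
      have h4 := pow_le_pow_left₀ (Real.rpow_nonneg h0 _) h3 j
      rwa [one_div, Real.rpow_inv_natCast_pow h0 (by omega)] at h4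
    rw [div_le_iff₀ (h.pos _)] at h2
    refine h2.trans ?_
    have := h.pos j
    gcongr
    omega

/-- auxiliary summable weights -/
noncomputable def w (n : ℕ) : ℝ := 1 / ((n : ℝ) + 1)^2

lemma w_pos (n : ℕ) : 0 < w n := by unfold w; positivity
lemma w_zero : w 0 = 1 := by simp [w]
lemma w_le_one (n : ℕ) : w n ≤ 1 := by
  unfold w; rw [div_le_one (by positivity)]; nlinarith [(n.cast_nonneg : (0:ℝ) ≤ n)]

lemma sum_w_le' (n : ℕ) : ∑ j ∈ Finset.range (n+1), w j ≤ 2 - 1 / (n + 1 : ℝ) := by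
  induction n with
  | zero => simp [w]; norm_num
  | succ n ih =>
    rw [Finset.sum_range_succ]
    have : w (n+1) ≤ 1 / (n + 1 : ℝ) - 1 / ((n + 1 : ℕ) + 1 : ℝ) := by
      unfold w; push_cast
      rw [div_sub_div _ _ (by positivity) (by positivity), div_le_div_iff₀ (by positivity) (by positivity)]
      nlinarith [(n.cast_nonneg : (0:ℝ) ≤ n)]
    linarith

lemma sum_w_le (n : ℕ) : ∑ j ∈ Finset.range (n+1), w j ≤ 2 := by
  have := sum_w_le' n
  have h : 0 ≤ 1 / (n + 1 : ℝ) := by positivity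
  linarith

lemma sum_ww_le (n : ℕ) : ∑ j ∈ Finset.range (n+1), w j * w (n - j) ≤ 8 * w (n+1) := by
  have h1 : ∀ j ∈ Finset.range (n+1), w j * w (n-j) ≤ 2 * w (n+1) * (w j + w (n-j)) := by
    intro j hj
    have hj' : j ≤ n := by simpa [Nat.lt_succ_iff] using hj
    unfold w
    rw [Nat.cast_sub hj']
    have hx : (j:ℝ) ≤ n := by exact_mod_cast hj'
    set a : ℝ := (j:ℝ) + 1 with ha
    have ha0 : 0 < a := by positivity
    set b : ℝ := (n:ℝ) - j + 1 with hb
    have hb0 : 0 < b := by linarith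
    have hn : ((n+1:ℕ):ℝ) + 1 = a + b := by push_cast; rw [ha, hb]; ring
    rw [hn]
    have e1 : 1 / a^2 * (1/b^2) = 1 / (a^2*b^2) := by field_simp
    have e2 : 2 * (1 / (a+b)^2) * (1 / a^2 + 1/b^2) = 2*(a^2+b^2)/((a+b)^2*(a^2*b^2)) := by
      field_simp; ring
    rw [e1, e2, div_le_div_iff₀ (by positivity) (by positivity)]
    have : (a+b)^2 ≤ 2*(a^2+b^2) := by nlinarith [sq_nonneg (a-b)]
    have h3 : 0 ≤ a^2*b^2 := by positivity
    nlinarith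
  calc _ ≤ ∑ j ∈ Finset.range (n+1), 2 * w (n+1) * (w j + w (n-j)) := Finset.sum_le_sum h1
    _ = 2 * w (n+1) * (∑ j ∈ Finset.range (n+1), w j + ∑ j ∈ Finset.range (n+1), w (n-j)) := by
        rw [← Finset.sum_add_distrib, Finset.mul_sum]
    _ = 2 * w (n+1) * (2 * ∑ j ∈ Finset.range (n+1), w j) := by
        have := Finset.sum_range_reflect w (n+1)
        simp only [Nat.add_sub_cancel, show ∀ j, n + 1 - 1 - j = n - j from fun j => by omega] at this
        rw [this]; ring
    _ ≤ 2 * w (n+1) * (2 * 2) := by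
        have := w_pos (n+1)
        gcongr; exact sum_w_le n
    _ = _ := by ring

end Loj


namespace Loj
open Set Filter Topology Metric
open scoped ContDiff Nat

variable {M : ℕ → ℝ}
variable {E F G : Type} [NormedAddCommGroup E] [NormedSpace ℝ E] [NormedAddCommGroup F]
  [NormedSpace ℝ F] [NormedAddCommGroup G] [NormedSpace ℝ G]

/-- Uniform Denjoy-Carleman bounds on a set. -/
def QB (M : ℕ → ℝ) (f : E → F) (s : Set E) (A B : ℝ) : Prop :=
  ContDiffOn ℝ ∞ f s ∧ ∀ n : ℕ, ∀ y ∈ s, ‖iteratedFDeriv ℝ n f y‖ ≤ A * B^n * (n ! * M n)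

/-- `f` is of Denjoy-Carleman class near `x`. -/
def QA (M : ℕ → ℝ) (f : E → F) (x : E) : Prop :=
  ∃ s : Set E, IsOpen s ∧ x ∈ s ∧ ∃ A B : ℝ, 0 ≤ A ∧ 1 ≤ B ∧ QB M f s A B

lemma iter_congr_open {f g : E → F} {s : Set E} (hs : IsOpen s) (h : EqOn f g s) (n : ℕ) {y : E} (hy : y ∈ s) :
    iteratedFDeriv ℝ n f y = iteratedFDeriv ℝ n g y := by
  have : f =ᶠ[𝓝 y] g := by
    filter_upwards [hs.mem_nhds hy] with z hz using h hz
  exact (this.iteratedFDeriv ℝ n).eq_of_nhds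

lemma QB.congr {f g : E → F} {s : Set E} {A B : ℝ} (hs : IsOpen s) (h : EqOn g f s) (hf : QB M f s A B) :
    QB M g s A B :=
  ⟨hf.1.congr h, fun n y hy => by rw [iter_congr_open hs h n hy]; exact hf.2 n y hy⟩

lemma QB.subset {f : E → F} {s t : Set E} {A B : ℝ} (h : t ⊆ s) (hf : QB M f s A B) :
    QB M f t A B := ⟨hf.1.mono h, fun n y hy => hf.2 n y (h hy)⟩

lemma QB.weaken (hM : Wt M) {f : E → F} {s : Set E} {A B A' B' : ℝ} (hf : QB M f s A B) (hA0 : 0 ≤ A) (hA : A ≤ A')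
    (hB0 : 0 ≤ B) (hB : B ≤ B') : QB M f s A' B' := ⟨hf.1, fun n y hy => by
  refine (hf.2 n y hy).trans ?_
  have := (hM.pos n).le
  have := hA0.trans hA
  gcongr⟩

lemma QA.congr {f g : E → F} {x : E} (hf : QA M f x) (h : g =ᶠ[𝓝 x] f) : QA M g x := by
  obtain ⟨s, hs, hx, A, B, hA, hB, hb⟩ := hf
  obtain ⟨t, ht, hto, hxt⟩ := _root_.mem_nhds_iff.1 h
  exact ⟨s ∩ t, hs.inter hto, ⟨hx, hxt⟩, A, B, hA, hB, (hb.subset inter_subset_left).congr (hs.inter hto)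
    (fun y hy => ht hy.2)⟩

lemma QA.contDiffAt {f : E → F} {x : E} (hf : QA M f x) : ContDiffAt ℝ ∞ f x := by
  obtain ⟨s, hs, hx, A, B, hA, hB, hb⟩ := hf
  exact hb.1.contDiffAt (hs.mem_nhds hx)

lemma QA.continuousAt {f : E → F} {x : E} (hf : QA M f x) : ContinuousAt f x := hf.contDiffAt.continuousAt

lemma QA.eventually {f : E → F} {x : E} (hf : QA M f x) : ∀ᶠ y in 𝓝 x, QA M f y := by
  obtain ⟨s, hs, hx, A, B, hA, hB, hb⟩ := hf
  filter_upwards [hs.mem_nhds hx] with y hy using ⟨s, hs, hy, A, B, hA, hB, hb⟩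

/-- The fundamental recursion, for `x ↦ g (f x)`. -/
lemma core (hM : Wt M) {f : E → F} {s : Set E} {t : Set F} (hs : IsOpen s) (ht : IsOpen t)
    (hmap : MapsTo f s t) (hf : ContDiffOn ℝ ∞ f s) {R S D : ℝ} (hR : 0 ≤ R) (hS : 0 ≤ S) (hD : 0 ≤ D)
    (hRS : 8 * R * D ≤ S) (n : ℕ)
    (hb : ∀ m < n, ∀ y ∈ s, ‖iteratedFDeriv ℝ m (fderiv ℝ f) y‖ ≤ D * S^m * w m * (m ! * M m)) :
    ∀ m ≤ n, ∀ (G : Type) [NormedAddCommGroup G] [NormedSpace ℝ G] (g : F → G) (k : ℕ) (A : ℝ), 0 ≤ A →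
      ContDiffOn ℝ ∞ g t →
      (∀ j : ℕ, ∀ y ∈ t, ‖iteratedFDeriv ℝ j g y‖ ≤ A * R^(k+j) * ((k+j)! * M (k+j))) →
      ∀ y ∈ s, ‖iteratedFDeriv ℝ m (g ∘ f) y‖ ≤ A * R^k * S^m * w m * ((k+m)! * M (k+m)) := by
  intro m
  induction m using Nat.strong_induction_on with
  | _ m ih =>
  intro hmn G _ _ g k A hA hg hgb y hy
  rcases m with _ | m
  · have := hgb 0 (f y) (hmap hy)
    simpa [w_zero] using this
  rw [← norm_iteratedFDeriv_fderiv]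
  set cl := ContinuousLinearMap.compL ℝ E F G
  have heq : EqOn (fderiv ℝ (g ∘ f)) (fun z => cl ((fderiv ℝ g ∘ f) z) (fderiv ℝ f z)) s := by
    intro z hz
    have h1 : DifferentiableAt ℝ f z := (hf.contDiffAt (hs.mem_nhds hz)).differentiableAt (by simp)
    have h2 : DifferentiableAt ℝ g (f z) :=
      (hg.contDiffAt (ht.mem_nhds (hmap hz))).differentiableAt (by simp)
    simp [cl, fderiv_comp z h2 h1]
  rw [iter_congr_open hs heq m hy]
  have hdf : ContDiffOn ℝ ∞ (fderiv ℝ f) s := hf.fderiv_of_isOpen hs (by simp)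
  have hdg : ContDiffOn ℝ ∞ (fderiv ℝ g) t := hg.fderiv_of_isOpen ht (by simp)
  have hbil := cl.norm_iteratedFDerivWithin_le_of_bilinear (hdg.comp hf hmap) hdf hs.uniqueDiffOn hy (n := m)
    (by exact_mod_cast le_top)
  rw [iteratedFDerivWithin_of_isOpen m hs hy] at hbil
  refine hbil.trans ?_
  have hcl := ContinuousLinearMap.norm_compL_le ℝ E F G
  have hterm : ∀ j ∈ Finset.range (m+1), (m.choose j : ℝ) * ‖iteratedFDerivWithin ℝ j (fderiv ℝ g ∘ f) s y‖ *
      ‖iteratedFDerivWithin ℝ (m-j) (fderiv ℝ f) s y‖ ≤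
      (A * R^(k+1) * S^m * D * ((k+(m+1))! * M (k+(m+1)))) * (w j * w (m-j)) := by
    intro j hj
    have hjm : j ≤ m := by simpa [Nat.lt_succ_iff] using hj
    rw [iteratedFDerivWithin_of_isOpen j hs hy, iteratedFDerivWithin_of_isOpen (m-j) hs hy]
    have h1 := ih j (by omega) (by omega) (F →L[ℝ] G) (fderiv ℝ g) (k+1) A hA hdg (by
      intro i z hz
      rw [norm_iteratedFDeriv_fderiv]
      have := hgb (i+1) z hz
      rwa [show k + (i+1) = k+1+i by ring] at this) y hy
    have h2 := hb (m-j) (by omega) y hy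
    have e1 : (m.choose j : ℝ) * ((k+1+j)! * (m-j)!) ≤ (k+(m+1))! := by
      have : m.choose j * ((k+1+j)! * (m-j)!) * j ! ≤ (k+(m+1))! * j ! := by
        have h3 := Nat.choose_mul_factorial_mul_factorial hjm
        calc m.choose j * ((k+1+j)! * (m-j)!) * j ! = (m.choose j * j ! * (m-j)!) * (k+1+j)! := by ring
          _ = m ! * (k+1+j)! := by rw [h3]
          _ ≤ _ := by
            have h5 : ∀ d, (j+d)! * (k+1+j)! ≤ (k+1+j+d)! * j ! := by
              intro d
              induction d with
              | zero => simp [mul_comm]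
              | succ d ihd =>
                rw [← add_assoc, ← add_assoc, Nat.factorial_succ, Nat.factorial_succ, mul_assoc, mul_assoc]
                exact Nat.mul_le_mul (by omega) ihd
            have := h5 (m-j)
            rwa [show j + (m-j) = m by omega, show k+1+j+(m-j) = k+(m+1) by omega] at this
      have := Nat.le_of_mul_le_mul_right this (Nat.factorial_pos j)
      exact_mod_cast this
    have e2 : M (k+1+j) * M (m-j) ≤ M (k+(m+1)) := by
      have := hM.mul_le (k+1+j) (m-j)
      rwa [show k+1+j+(m-j) = k+(m+1) by omega] at this
    have hM1 := (hM.pos (k+1+j)).le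
    have hM2 := (hM.pos (m-j)).le
    have hM3 := (hM.pos (k+(m+1))).le
    have hw1 := (w_pos j).le
    have hw2 := (w_pos (m-j)).le
    calc _ ≤ (m.choose j : ℝ) * (A * R^(k+1) * S^j * w j * ((k+1+j)! * M (k+1+j))) *
          (D * S^(m-j) * w (m-j) * ((m-j)! * M (m-j))) := by gcongr
      _ = (A * R^(k+1) * (S^j * S^(m-j)) * D) * (((m.choose j : ℝ) * ((k+1+j)! * (m-j)!)) *
          (M (k+1+j) * M (m-j))) * (w j * w (m-j)) := by ring
      _ ≤ (A * R^(k+1) * (S^j * S^(m-j)) * D) * ((k+(m+1))! * M (k+(m+1))) * (w j * w (m-j)) := by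
          gcongr
      _ = _ := by rw [← pow_add, show j + (m-j) = m by omega]
  have hM3 := (hM.pos (k+(m+1))).le
  have hw3 := (w_pos (m+1)).le
  calc _ ≤ 1 * ∑ j ∈ Finset.range (m+1), (A * R^(k+1) * S^m * D * ((k+(m+1))! * M (k+(m+1)))) * (w j * w (m-j)) := by
        gcongr ?_ * ?_
        exact Finset.sum_le_sum hterm
    _ = (A * R^(k+1) * S^m * D * ((k+(m+1))! * M (k+(m+1)))) * ∑ j ∈ Finset.range (m+1), (w j * w (m-j)) := by
        rw [one_mul, Finset.mul_sum]
    _ ≤ (A * R^(k+1) * S^m * D * ((k+(m+1))! * M (k+(m+1)))) * (8 * w (m+1)) := by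
        gcongr; exact sum_ww_le m
    _ = (A * R^k * S^m * w (m+1) * ((k+(m+1))! * M (k+(m+1)))) * (8 * R * D) := by ring
    _ ≤ (A * R^k * S^m * w (m+1) * ((k+(m+1))! * M (k+(m+1)))) * S := by gcongr
    _ = _ := by ring

end Loj


namespace Loj
open Set Filter Topology Metric
open scoped ContDiff Nat

variable {M : ℕ → ℝ}
variable {E F G : Type} [NormedAddCommGroup E] [NormedSpace ℝ E] [NormedAddCommGroup F]
  [NormedSpace ℝ F] [NormedAddCommGroup G] [NormedSpace ℝ G]

lemma sq_le_four_pow (n : ℕ) : ((n:ℝ)+1)^2 ≤ 4^n := by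
  have h : ((n:ℝ)+1) ≤ 2^n := by
    have := Nat.lt_two_pow_self (n := n)
    exact_mod_cast this
  calc ((n:ℝ)+1)^2 ≤ (2^n)^2 := by gcongr
    _ = 4^n := by rw [← pow_mul, mul_comm, pow_mul]; norm_num

lemma one_le_w (n : ℕ) : 1 ≤ 4^n * w n := by
  unfold w
  rw [mul_one_div, le_div_iff₀ (by positivity), one_mul]
  exact sq_le_four_pow n

lemma QB.fderiv (hM : Wt M) {f : E → F} {s : Set E} {A B : ℝ} (hs : IsOpen s) (hA : 0 ≤ A) (hB : 1 ≤ B)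
    (h : QB M f s A B) : ∃ A' B' : ℝ, 0 ≤ A' ∧ 1 ≤ B' ∧ QB M (fderiv ℝ f) s A' B' := by
  obtain ⟨C, hC1, hC⟩ := hM.der'
  refine ⟨A * B * C, B * 2 * C, by positivity, by nlinarith [mul_le_mul hB hC1 (by norm_num) (by linarith)],
    h.1.fderiv_of_isOpen hs (by simp), fun n y hy => ?_⟩
  rw [norm_iteratedFDeriv_fderiv]
  refine (h.2 (n+1) y hy).trans ?_
  have h1 := hC n
  have h2 : ((n:ℝ)+1) ≤ 2^n := by
    have := Nat.lt_two_pow_self (n := n)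
    exact_mod_cast this
  have hMn := hM.pos n
  have hMn' := hM.pos (n+1)
  rw [Nat.factorial_succ]; push_cast
  calc A * B ^ (n + 1) * ((↑n + 1) * ↑n ! * M (n + 1)) ≤ A * B ^ (n + 1) * (2^n * ↑n ! * (C^(n+1) * M n)) := by
        gcongr
    _ = _ := by rw [mul_pow, mul_pow]; ring

lemma QA.fderiv (hM : Wt M) {f : E → F} {x : E} (hf : QA M f x) : QA M (fderiv ℝ f) x := by
  obtain ⟨s, hs, hx, A, B, hA, hB, hb⟩ := hf
  obtain ⟨A', B', hA', hB', h⟩ := hb.fderiv hM hs hA hB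
  exact ⟨s, hs, hx, A', B', hA', hB', h⟩

lemma QA.comp (hM : Wt M) {g : F → G} {f : E → F} {x : E} (hg : QA M g (f x)) (hf : QA M f x) :
    QA M (g ∘ f) x := by
  have hc := hf.continuousAt
  obtain ⟨t, ht, hxt, Ag, R, hAg, hR, hgb⟩ := hg
  obtain ⟨s, hs, hxs, A, B, hA, hB, hfb⟩ := hf
  obtain ⟨D, B', hD, hB', hdf⟩ := hfb.fderiv hM hs hA hB
  obtain ⟨s', hs', hso', hxs'⟩ := _root_.mem_nhds_iff.1 (inter_mem (hs.mem_nhds hxs) (hc.preimage_mem_nhds (ht.mem_nhds hxt)))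
  set S := max (4 * B') (8 * R * D)
  have hS1 : 4 * B' ≤ S := le_max_left _ _
  have hS2 : 8 * R * D ≤ S := le_max_right _ _
  have hS0 : 1 ≤ S := by linarith
  refine ⟨s', hso', hxs', Ag, S, hAg, hS0, hgb.1.comp (hfb.1.mono fun y hy => (hs' hy).1) (fun y hy => (hs' hy).2), fun n y hy => ?_⟩
  have := core hM hso' ht (fun y hy => (hs' hy).2) (hfb.1.mono fun y hy => (hs' hy).1) (R := R) (S := S) (D := D)
    (by linarith) (by linarith) hD hS2 n (by
      intro m hm z hz
      refine (hdf.2 m z (hs' hz).1).trans ?_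
      have h1 := one_le_w m
      have hMm := (hM.pos m).le
      have hw := (w_pos m).le
      calc D * B'^m * (m ! * M m) ≤ D * B'^m * (m ! * M m) * (4^m * w m) := le_mul_of_one_le_right (by positivity) h1
        _ = D * (4*B')^m * w m * (m ! * M m) := by rw [mul_pow]; ring
        _ ≤ _ := by gcongr) n le_rfl G g 0 Ag hAg hgb.1 (by simpa using hgb.2) y hy
  refine this.trans ?_
  have hMm := (hM.pos n).le
  have := w_le_one n
  simp only [pow_zero, mul_one, zero_add]
  calc Ag * S^n * w n * (n ! * M n) ≤ Ag * S^n * 1 * (n ! * M n) := by gcongr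
    _ = _ := by rw [mul_one]

/-- Solutions of `D f = H ∘ f` are of class `M` if `H` is. -/
lemma QA.ode (hM : Wt M) {f : E → F} {H : F → (E →L[ℝ] F)} {x : E}
    (hode : ∀ᶠ y in 𝓝 x, HasFDerivAt f (H (f y)) y) (hH : QA M H (f x)) : QA M f x := by
  have hc := hode.self_of_nhds.continuousAt
  obtain ⟨t, ht, hxt, D, R, hD, hR, hgb⟩ := hH
  have hcn : ∀ᶠ y in 𝓝 x, ‖f y‖ < ‖f x‖ + 1 := hc.norm.eventually_lt_const (by linarith)
  obtain ⟨s, hs, hso, hxs⟩ := _root_.mem_nhds_iff.1 (inter_mem hcn (inter_mem hode (hc.preimage_mem_nhds (ht.mem_nhds hxt))))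
  have hmap : MapsTo f s t := fun y hy => (hs hy).2.2
  have hfs : ContDiffOn ℝ ∞ f s := by
    rw [contDiffOn_infty]
    intro n
    induction n with
    | zero =>
      exact contDiffOn_zero.2 fun y hy => ((hs hy).2.1 : HasFDerivAt f _ y).continuousAt.continuousWithinAt
    | succ n ih =>
      push_cast
      rw [contDiffOn_succ_iff_fderiv_of_isOpen hso]
      refine ⟨fun y hy => ((hs hy).2.1 : HasFDerivAt f _ y).differentiableAt.differentiableWithinAt, by simp, ?_⟩
      refine ContDiffOn.congr (f := H ∘ f) ?_ (fun y hy => ((hs hy).2.1 : HasFDerivAt f _ y).fderiv)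
      exact (hgb.1.of_le (by exact_mod_cast le_top)).comp ih hmap
  set S := max 1 (8 * R * D)
  have hS2 : 8 * R * D ≤ S := le_max_right _ _
  have hS0 : 1 ≤ S := le_max_left _ _
  have key : ∀ n : ℕ, ∀ y ∈ s, ‖iteratedFDeriv ℝ n (_root_.fderiv ℝ f) y‖ ≤ D * S^n * w n * (n ! * M n) := by
    intro n
    induction n using Nat.strong_induction_on with
    | _ n ih =>
    intro y hy
    have heq : EqOn (_root_.fderiv ℝ f) (H ∘ f) s := fun z hz => ((hs hz).2.1 : HasFDerivAt f _ z).fderiv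
    rw [iter_congr_open hso heq n hy]
    have := core hM hso ht hmap hfs (R := R) (S := S) (D := D)
      (by linarith) (by linarith) hD hS2 n ih n le_rfl _ H 0 D hD hgb.1 (by simpa using hgb.2) y hy
    simpa using this
  refine ⟨s, hso, hxs, max D (‖f x‖ + 1), S, le_max_of_le_left hD, hS0, hfs, fun n y hy => ?_⟩
  have hmx : 0 ≤ max D (‖f x‖ + 1) := le_max_of_le_left hD
  rcases n with _ | n
  · have : ‖f y‖ < _ := (hs hy).1
    simp only [norm_iteratedFDeriv_zero, pow_zero, mul_one, Nat.factorial_zero, Nat.cast_one, hM.zero]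
    exact this.le.trans (le_max_right _ _)
  · rw [← norm_iteratedFDeriv_fderiv]
    refine (key n y hy).trans ?_
    have hMm := (hM.pos n).le
    have hMm' := (hM.pos (n+1)).le
    have hw := (w_pos n).le
    calc D * S^n * w n * (n ! * M n) ≤ max D (‖f x‖ + 1) * S^(n+1) * 1 * ((n+1)! * M (n+1)) := by
          gcongr
          · exact le_max_left _ _
          · omega
          · exact w_le_one n
          · omega
          · exact hM.mono (by omega)
      _ = _ := by ring

lemma QA.bilin (hM : Wt M) (L : E →L[ℝ] F →L[ℝ] G) {H : Type} [NormedAddCommGroup H] [NormedSpace ℝ H]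
    {f : H → E} {g : H → F} {x : H} (hf : QA M f x) (hg : QA M g x) : QA M (fun y => L (f y) (g y)) x := by
  obtain ⟨s, hs, hxs, A, B, hA, hB, hfb⟩ := hf
  obtain ⟨t, ht, hxt, A', B', hA', hB', hgb⟩ := hg
  set R := max B B'
  have hR1 : B ≤ R := le_max_left _ _
  have hR2 : B' ≤ R := le_max_right _ _
  have hf' := (hfb.weaken hM hA le_rfl (by linarith) hR1).subset (t := s ∩ t) inter_subset_left
  have hg' := (hgb.weaken hM hA' le_rfl (by linarith) hR2).subset (t := s ∩ t) inter_subset_right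
  have hst := hs.inter ht
  have hR0 : 0 ≤ R := by linarith
  refine ⟨s ∩ t, hst, ⟨hxs, hxt⟩, ‖L‖ * (A * A'), 2 * R, by positivity, by linarith,
    (L.isBoundedBilinearMap.contDiff.comp₂_contDiffOn hf'.1 hg'.1), fun n y hy => ?_⟩
  have hbil := L.norm_iteratedFDerivWithin_le_of_bilinear hf'.1 hg'.1 hst.uniqueDiffOn hy (n := n)
    (by exact_mod_cast le_top)
  rw [iteratedFDerivWithin_of_isOpen n hst hy] at hbil
  refine hbil.trans ?_
  have hMn := (hM.pos n).le
  have : ∀ j ∈ Finset.range (n+1), (n.choose j : ℝ) * ‖iteratedFDerivWithin ℝ j f (s ∩ t) y‖ *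
      ‖iteratedFDerivWithin ℝ (n-j) g (s ∩ t) y‖ ≤ A * A' * R^n * (n ! * M n) := by
    intro j hj
    have hjm : j ≤ n := by simpa [Nat.lt_succ_iff] using hj
    rw [iteratedFDerivWithin_of_isOpen j hst hy, iteratedFDerivWithin_of_isOpen (n-j) hst hy]
    have h3 : (n.choose j : ℝ) * j ! * (n-j)! = n ! := by
      exact_mod_cast Nat.choose_mul_factorial_mul_factorial hjm
    have e2 : M j * M (n-j) ≤ M n := by
      have := hM.mul_le j (n-j)
      rwa [show j+(n-j) = n by omega] at this
    have hM1 := (hM.pos j).le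
    have hM2 := (hM.pos (n-j)).le
    calc _ ≤ (n.choose j : ℝ) * (A * R^j * (j ! * M j)) * (A' * R^(n-j) * ((n-j)! * M (n-j))) := by
          gcongr
          · exact hf'.2 j y hy
          · exact hg'.2 _ y hy
      _ = A * A' * (R^j * R^(n-j)) * (((n.choose j : ℝ) * j ! * (n-j)!) * (M j * M (n-j))) := by ring
      _ ≤ A * A' * (R^j * R^(n-j)) * (n ! * M n) := by rw [h3]; gcongr
      _ = _ := by rw [← pow_add, show j+(n-j) = n by omega]
  have h2 : ((n:ℝ)+1) ≤ 2^n := by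
    have := Nat.lt_two_pow_self (n := n)
    exact_mod_cast this
  calc _ ≤ ‖L‖ * ∑ j ∈ Finset.range (n+1), A * A' * R^n * (n ! * M n) := by
        gcongr ‖L‖ * ?_; exact Finset.sum_le_sum this
    _ = ‖L‖ * (((n:ℝ)+1) * (A * A' * R^n * (n ! * M n))) := by simp
    _ ≤ ‖L‖ * (2^n * (A * A' * R^n * (n ! * M n))) := by gcongr
    _ = _ := by rw [mul_pow]; ring

lemma QA.add (hM : Wt M) {f g : E → F} {x : E} (hf : QA M f x) (hg : QA M g x) : QA M (fun y => f y + g y) x := by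
  obtain ⟨s, hs, hxs, A, B, hA, hB, hfb⟩ := hf
  obtain ⟨t, ht, hxt, A', B', hA', hB', hgb⟩ := hg
  set R := max B B'
  have hR1 : B ≤ R := le_max_left _ _
  have hR2 : B' ≤ R := le_max_right _ _
  have hf' := (hfb.weaken hM hA le_rfl (by linarith) hR1).subset (t := s ∩ t) inter_subset_left
  have hg' := (hgb.weaken hM hA' le_rfl (by linarith) hR2).subset (t := s ∩ t) inter_subset_right
  have hst := hs.inter ht
  refine ⟨s ∩ t, hst, ⟨hxs, hxt⟩, A + A', R, by positivity, by linarith, hf'.1.add hg'.1, fun n y hy => ?_⟩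
  have e := fun_iteratedFDeriv_add_apply (𝕜 := ℝ) (i := n) (f := f) (g := g) (x := y)
    ((hf'.1.contDiffAt (hst.mem_nhds hy)).of_le (by exact_mod_cast le_top))
    ((hg'.1.contDiffAt (hst.mem_nhds hy)).of_le (by exact_mod_cast le_top))
  rw [e]
  refine (norm_add_le _ _).trans ?_
  have := add_le_add (hf'.2 n y hy) (hg'.2 n y hy)
  linarith

lemma QA.const (hM : Wt M) (c : F) (x : E) : QA M (fun _ : E => c) x := by
  refine ⟨univ, isOpen_univ, mem_univ _, ‖c‖, 1, norm_nonneg _, le_rfl, contDiffOn_const, fun n y _ => ?_⟩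
  rcases n with _ | n
  · simp [hM.zero]
  · rw [iteratedFDeriv_const_of_ne (by omega)]
    simp only [Pi.zero_apply, norm_zero]
    have hMm := (hM.pos (n+1)).le
    positivity

lemma QA.clm (hM : Wt M) (L : E →L[ℝ] F) (x : E) : QA M (fun y => L y) x := by
  refine QA.ode hM (H := fun _ => L) (Eventually.of_forall fun y => L.hasFDerivAt) (QA.const hM L _)

lemma QA.clm_comp (hM : Wt M) (L : F →L[ℝ] G) {f : E → F} {x : E} (hf : QA M f x) : QA M (fun y => L (f y)) x :=
  QA.comp hM (QA.clm hM L (f x)) hf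

lemma QA.id (hM : Wt M) (x : E) : QA M (fun y : E => y) x := QA.clm hM (ContinuousLinearMap.id ℝ E) x

lemma QA.mul (hM : Wt M) {f g : E → ℝ} {x : E} (hf : QA M f x) (hg : QA M g x) : QA M (fun y => f y * g y) x :=
  QA.bilin hM (ContinuousLinearMap.mul ℝ ℝ) hf hg

lemma QA.neg (hM : Wt M) {f : E → F} {x : E} (hf : QA M f x) : QA M (fun y => - f y) x :=
  QA.clm_comp hM (-ContinuousLinearMap.id ℝ F) hf

lemma QA.sub (hM : Wt M) {f g : E → F} {x : E} (hf : QA M f x) (hg : QA M g x) : QA M (fun y => f y - g y) x := by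
  simpa [sub_eq_add_neg] using hf.add hM (hg.neg hM)

lemma QA.sum (hM : Wt M) {ι : Type} (s : Finset ι) {f : ι → E → F} {x : E} (hf : ∀ i ∈ s, QA M (f i) x) :
    QA M (fun y => ∑ i ∈ s, f i y) x := by
  classical
  induction s using Finset.induction_on with
  | empty => simpa using QA.const hM (0:F) x
  | insert a s ha ih =>
    simp only [Finset.sum_insert ha]
    exact (hf a (by simp)).add hM (ih fun i hi => hf i (by simp [hi]))

lemma QA.prod (hM : Wt M) {ι : Type} (s : Finset ι) {f : ι → E → ℝ} {x : E} (hf : ∀ i ∈ s, QA M (f i) x) :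
    QA M (fun y => ∏ i ∈ s, f i y) x := by
  classical
  induction s using Finset.induction_on with
  | empty => simpa using QA.const hM (1:ℝ) x
  | insert a s ha ih =>
    simp only [Finset.prod_insert ha]
    exact (hf a (by simp)).mul hM (ih fun i hi => hf i (by simp [hi]))

lemma QA.pow (hM : Wt M) {f : E → ℝ} {x : E} (hf : QA M f x) (n : ℕ) : QA M (fun y => f y ^ n) x := by
  induction n with
  | zero => simpa using QA.const hM (1:ℝ) x
  | succ n ih => simpa only [pow_succ] using ih.mul hM hf

lemma QA.pi (hM : Wt M) {ι : Type} [Fintype ι] {f : E → ι → ℝ} {x : E} (hf : ∀ i, QA M (fun y => f y i) x) :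
    QA M f x := by
  classical
  have : f = fun y => ∑ i, ContinuousLinearMap.single ℝ (fun _ : ι => ℝ) i (f y i) := by
    funext y
    simp only [ContinuousLinearMap.single_apply]
    exact (Finset.univ_sum_single (f y)).symm
  rw [this]
  exact QA.sum hM _ fun i _ => QA.clm_comp hM _ (hf i)

lemma QA.proj (hM : Wt M) {ι : Type} [Fintype ι] {f : E → ι → ℝ} {x : E} (hf : QA M f x) (i : ι) :
    QA M (fun y => f y i) x :=
  QA.clm_comp hM (ContinuousLinearMap.proj i : (ι → ℝ) →L[ℝ] ℝ) hf

lemma QA.prodMk (hM : Wt M) {f : E → F} {g : E → G} {x : E} (hf : QA M f x) (hg : QA M g x) :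
    QA M (fun y => (f y, g y)) x := by
  have := (hf.clm_comp hM (ContinuousLinearMap.inl ℝ F G)).add hM (hg.clm_comp hM (ContinuousLinearMap.inr ℝ F G))
  simpa using this

lemma QA.inv (hM : Wt M) {x : ℝ} (hx : x ≠ 0) : QA M (fun y : ℝ => y⁻¹) x := by
  have hr : 0 < |x|/2 := by positivity
  have hge : ∀ y ∈ ball x (|x|/2), |x|/2 ≤ |y| := by
    intro y hy
    rw [mem_ball, Real.dist_eq] at hy
    have := abs_sub_abs_le_abs_sub x y
    rw [abs_sub_comm] at this
    linarith
  refine ⟨ball x (|x|/2), isOpen_ball, mem_ball_self hr, 2/|x|, max 1 (2/|x|), by positivity, le_max_left _ _,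
    contDiffOn_id.inv (fun y hy h0 => ?_), fun n y hy => ?_⟩
  · have := hge y hy
    have h0 : y = 0 := h0
    rw [h0, abs_zero] at this; exfalso; linarith
  · rw [norm_iteratedFDeriv_eq_norm_iteratedDeriv, iteratedDeriv_eq_iterate]
    have := iter_deriv_inv (𝕜 := ℝ) n y
    have hy' := hge y hy
    have hMn := hM.one_le n
    have e : (fun y : ℝ => y⁻¹) = Inv.inv := rfl
    rw [e, this]
    have h1 : ‖y ^ (-1 - (n:ℤ))‖ ≤ (2/|x|)^(n+1) := by
      rw [show (-1 - (n:ℤ)) = -((n+1 : ℕ) : ℤ) by push_cast; ring, zpow_neg, zpow_natCast, norm_inv, norm_pow, Real.norm_eq_abs,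
        ← inv_pow]
      gcongr
      rw [inv_le_comm₀ (by linarith) (by positivity)]
      simpa using hy'
    rw [norm_mul, norm_mul, norm_pow]
    rw [norm_neg, norm_one, one_pow, one_mul, RCLike.norm_natCast]
    calc (n ! : ℝ) * ‖y ^ (-1 - (n:ℤ))‖ ≤ n ! * (2/|x|)^(n+1) := by gcongr
      _ = 2/|x| * (2/|x|)^n * (n ! * 1) := by ring
      _ ≤ _ := by
        gcongr
        exact le_max_right _ _

end Loj


namespace Loj
open Set Filter Topology Metric
open scoped ContDiff Nat

variable {M : ℕ → ℝ}

/-- the ratio of consecutive bounds -/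
noncomputable def mu (M : ℕ → ℝ) (B : ℝ) (N : ℕ) : ℝ := B * (N + 1) * (M (N+1) / M N)

lemma mu_pos (hM : Wt M) {B : ℝ} (hB : 1 ≤ B) (N : ℕ) : 0 < mu M B N := by
  have := hM.pos N
  have := hM.pos (N+1)
  unfold mu; positivity

lemma mu_mono (hM : Wt M) {B : ℝ} (hB : 1 ≤ B) : Monotone (mu M B) := by
  intro a b hab
  have h := hM.ratio_mono hab
  simp only at h
  have := hM.pos a
  have := hM.pos (a+1)
  unfold mu
  gcongr

lemma bd_succ (hM : Wt M) (B : ℝ) (j : ℕ) :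
    B^(j+1) * ((j+1)! * M (j+1)) = (B^j * (j ! * M j)) * mu M B j := by
  have := hM.pos j
  unfold mu; rw [Nat.factorial_succ]; push_cast; field_simp; ring

lemma bang_step (hM : Wt M) {B A : ℝ} (hB : 1 ≤ B) (hA : 0 ≤ A) {f : ℕ → ℝ → ℝ}
    (hd : ∀ j, ∀ x ∈ Icc (0:ℝ) 1, HasDerivAt (f j) (f (j+1) x) x)
    (hb : ∀ j, ∀ x ∈ Icc (0:ℝ) 1, |f j x| ≤ A * (B^j * (j ! * M j))) (N : ℕ) {x : ℝ} (hx : 0 ≤ x)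
    (hP : ∀ j : ℕ, |f j x| ≤ A * Real.exp (-(N+1 : ℕ)) * Real.exp j * (B^j * (j ! * M j))) :
    ∀ j : ℕ, ∀ y ∈ Icc x 1, |f j y| ≤ A * Real.exp (-(N+1 : ℕ)) * Real.exp j * (B^j * (j ! * M j))
      * Real.exp (Real.exp 1 * mu M B N * (y - x)) := by
  have hmu := mu_pos hM hB N
  have hm : ∀ j, 0 < B^j * (j ! * M j) := fun j => by have := hM.pos j; positivity
  have hbig : ∀ j : ℕ, N + 1 ≤ j → ∀ y ∈ Icc x 1, |f j y| ≤ A * Real.exp (-(N+1 : ℕ)) * Real.exp j * (B^j * (j ! * M j))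
      * Real.exp (Real.exp 1 * mu M B N * (y - x)) := by
    intro j hj y hy
    have h1 : 1 ≤ Real.exp (-(N+1 : ℕ)) * Real.exp j := by
      rw [← Real.exp_add, Real.one_le_exp_iff]
      have : ((N+1 : ℕ):ℝ) ≤ j := by exact_mod_cast hj
      linarith
    have h2 : 1 ≤ Real.exp (Real.exp 1 * mu M B N * (y - x)) := by
      rw [Real.one_le_exp_iff]
      have : 0 ≤ y - x := by linarith [hy.1]
      positivity
    refine (hb j y ⟨hx.trans hy.1, hy.2⟩).trans ?_
    have := (hm j).le
    calc A * (B^j * (j ! * M j)) = A * (B^j * (j ! * M j)) * 1 * 1 := by ring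
      _ ≤ A * (B^j * (j ! * M j)) * (Real.exp (-(N+1 : ℕ)) * Real.exp j) * Real.exp (Real.exp 1 * mu M B N * (y - x)) := by
        gcongr
      _ = _ := by ring
  have hind : ∀ i : ℕ, ∀ j : ℕ, N + 1 ≤ j + i → ∀ y ∈ Icc x 1, |f j y| ≤ A * Real.exp (-(N+1 : ℕ)) * Real.exp j * (B^j * (j ! * M j))
      * Real.exp (Real.exp 1 * mu M B N * (y - x)) := by
    intro i
    induction i with
    | zero => intro j hj; exact hbig j hj
    | succ i ih =>
      intro j hj
      by_cases hjN : N + 1 ≤ j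
      · exact hbig j hjN
      set K := A * Real.exp (-(N+1 : ℕ)) * Real.exp j * (B^j * (j ! * M j)) with hK
      have hK0 : 0 ≤ K := by have := (hm j).le; positivity
      set c := Real.exp 1 * mu M B N with hc
      have hBd : ∀ y, HasDerivAt (fun y => K * Real.exp (c * (y - x))) (K * (Real.exp (c * (y - x)) * c)) y := by
        intro y
        have := ((((hasDerivAt_id y).sub_const x).const_mul c).exp).const_mul K
        simpa using this
      have hmain := image_norm_le_of_norm_deriv_right_le_deriv_boundary (f := f j) (f' := f (j+1)) (a := x) (b := 1)
        (B := fun y => K * Real.exp (c * (y - x))) (B' := fun y => K * (Real.exp (c * (y - x)) * c))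
        (fun y hy => (hd j y ⟨hx.trans hy.1, hy.2⟩).continuousAt.continuousWithinAt)
        (fun y hy => (hd j y ⟨hx.trans hy.1, hy.2.le⟩).hasDerivWithinAt)
        (by simpa only [Real.norm_eq_abs, sub_self, mul_zero, Real.exp_zero, mul_one] using hP j) hBd (by
          intro y hy
          refine (ih (j+1) (by omega) y ⟨hy.1, hy.2.le⟩).trans ?_
          rw [bd_succ hM]
          have hmm : mu M B j ≤ mu M B N := mu_mono hM hB (by omega)
          have := (hm j).le
          push_cast [Real.exp_add]
          calc _ ≤ A * Real.exp (-((N:ℝ)+1)) * (Real.exp j * Real.exp 1) * (B^j * (j ! * M j) * mu M B N) * Real.exp (c * (y - x)) := by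
                gcongr
            _ = _ := by rw [hK, hc]; push_cast; ring)
      intro y hy
      exact hmain hy
  intro j
  exact hind (N+1) j (by omega)

lemma bang (hM : Wt M) {B A : ℝ} (hB : 1 ≤ B) (hA : 0 ≤ A) {f : ℕ → ℝ → ℝ}
    (hd : ∀ j, ∀ x ∈ Icc (0:ℝ) 1, HasDerivAt (f j) (f (j+1) x) x)
    (hb : ∀ j, ∀ x ∈ Icc (0:ℝ) 1, |f j x| ≤ A * (B^j * (j ! * M j)))
    (h0 : ∀ j, f j 0 = 0) : f 0 1 = 0 := by
  have hm : ∀ j, 0 < B^j * (j ! * M j) := fun j => by have := hM.pos j; positivity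
  have claim : ∀ k n : ℕ, ∀ y ∈ Icc (0:ℝ) 1, y ≤ ∑ i ∈ Finset.range k, 1 / (Real.exp 1 * mu M B (n + i)) →
      ∀ j : ℕ, |f j y| ≤ A * Real.exp (-(n : ℕ)) * Real.exp j * (B^j * (j ! * M j)) := by
    intro k
    induction k with
    | zero =>
      intro n y hy hyk j
      have : y = 0 := le_antisymm (by simpa using hyk) hy.1
      have := (hm j).le
      subst y; rw [h0, abs_zero]; positivity
    | succ k ih =>
      intro n y hy hyk j
      rw [Finset.sum_range_succ'] at hyk
      set T := ∑ i ∈ Finset.range k, 1 / (Real.exp 1 * mu M B (n + (i+1))) with hT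
      have hT0 : 0 ≤ T := Finset.sum_nonneg fun i _ => by have := mu_pos hM hB (n+(i+1)); positivity
      have hx0 : 0 ≤ min y T := le_min hy.1 hT0
      have hP := ih (n+1) (min y T) ⟨hx0, (min_le_left _ _).trans hy.2⟩ (by
        refine (min_le_right _ _).trans (le_of_eq ?_)
        rw [hT]; refine Finset.sum_congr rfl fun i _ => ?_
        rw [show n + (i+1) = n + 1 + i by ring])
      have hs := bang_step hM hB hA hd hb n hx0 hP j y ⟨min_le_left _ _, hy.2⟩
      refine hs.trans ?_
      have hmu := mu_pos hM hB n
      have h1 : Real.exp 1 * mu M B n * (y - min y T) ≤ 1 := by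
        have h2 : y - min y T ≤ 1 / (Real.exp 1 * mu M B n) := by
          rcases min_cases y T with h | h
          · rw [h.1, sub_self]; positivity
          · rw [h.1]; simp only [add_zero] at hyk; linarith
        calc _ ≤ Real.exp 1 * mu M B n * (1 / (Real.exp 1 * mu M B n)) := by gcongr
          _ = 1 := by field_simp
      have := (hm j).le
      calc _ ≤ A * Real.exp (-(n+1 : ℕ)) * Real.exp j * (B^j * (j ! * M j)) * Real.exp 1 := by gcongr
        _ = A * (Real.exp (-(n+1 : ℕ)) * Real.exp 1) * Real.exp j * (B^j * (j ! * M j)) := by ring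
        _ = _ := by rw [← Real.exp_add]; congr 4; push_cast; ring
  have hns : ∀ n : ℕ, ∃ k, 1 ≤ ∑ i ∈ Finset.range k, 1 / (Real.exp 1 * mu M B (n + i)) := by
    intro n
    have hnonneg : ∀ i, 0 ≤ 1 / (Real.exp 1 * mu M B i) := fun i => by have := mu_pos hM hB i; positivity
    have h1 : ¬ Summable (fun i => 1 / (Real.exp 1 * mu M B i)) := by
      intro hs
      have h2 : Summable (fun k : ℕ => M k / (((k : ℝ) + 1) * M (k+1))) := by
        refine (hs.mul_left (Real.exp 1 * B)).congr fun k => ?_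
        have := hM.pos k
        have := hM.pos (k+1)
        have : 0 < B := by linarith
        unfold mu; field_simp
      have h3 := ENNReal.ofReal_tsum_of_nonneg (fun k => by
        have := hM.pos k
        have := hM.pos (k+1)
        positivity) h2
      rw [hM.qa] at h3
      exact ENNReal.ofReal_ne_top h3
    have h2 : ¬ Summable (fun i => 1 / (Real.exp 1 * mu M B (i + n))) := fun h => h1 ((summable_nat_add_iff n).1 h)
    rw [not_summable_iff_tendsto_nat_atTop_of_nonneg (fun i => hnonneg _)] at h2
    obtain ⟨k, hk⟩ := (h2.eventually_ge_atTop 1).exists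
    exact ⟨k, by simpa [add_comm] using hk⟩
  have hle : ∀ n : ℕ, |f 0 1| ≤ A * Real.exp (-(n:ℝ)) := by
    intro n
    obtain ⟨k, hk⟩ := hns n
    have := claim k n 1 (by simp) hk 0
    simpa [hM.zero] using this
  have hlim : Tendsto (fun n : ℕ => A * Real.exp (-(n:ℝ))) atTop (𝓝 (A * 0)) :=
    (Real.tendsto_exp_neg_atTop_nhds_zero.comp tendsto_natCast_atTop_atTop).const_mul A
  rw [mul_zero] at hlim
  have := ge_of_tendsto' hlim hle
  exact abs_eq_zero.1 (le_antisymm this (abs_nonneg _))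

variable {E F : Type} [NormedAddCommGroup E] [NormedSpace ℝ E]

/-- Quasi-analyticity along a segment. -/
lemma QB.eq_zero_of_flat (hM : Wt M) {f : E → ℝ} {s : Set E} (hs : IsOpen s) (hc : Convex ℝ s) {A B : ℝ} (hA : 0 ≤ A) (hB : 1 ≤ B)
    (hf : QB M f s A B) {p q : E} (hp : p ∈ s) (hq : q ∈ s)
    (h0 : ∀ n : ℕ, iteratedFDeriv ℝ n f p (fun _ => q - p) = 0) : f q = 0 := by
  set v := q - p with hv
  have hmem : ∀ t ∈ Icc (0:ℝ) 1, p + t • v ∈ s := fun t ht => hc.add_smul_sub_mem hp hq ht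
  set g : ℕ → ℝ → ℝ := fun j t => iteratedFDeriv ℝ j f (p + t • v) (fun _ => v) with hg
  have hd : ∀ j, ∀ t ∈ Icc (0:ℝ) 1, HasDerivAt (g j) (g (j+1) t) t := by
    intro j t ht
    have hdiff : DifferentiableAt ℝ (iteratedFDeriv ℝ j f) (p + t • v) :=
      (hf.1.contDiffAt (hs.mem_nhds (hmem t ht))).differentiableAt_iteratedFDeriv (by exact_mod_cast ENat.natCast_lt_top j)
    have h1 : HasDerivAt (fun t : ℝ => p + t • v) v t := by
      simpa using ((hasDerivAt_id t).smul_const v).const_add p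
    have h2 := hdiff.hasFDerivAt.comp_hasDerivAt t h1
    have h3 := ((ContinuousMultilinearMap.apply ℝ (fun _ : Fin j => E) ℝ (fun _ => v)).hasFDerivAt.comp_hasDerivAt t h2)
    exact h3
  set B' := B * (‖v‖ + 1)
  have hB' : 1 ≤ B' := by
    have : 1 ≤ ‖v‖ + 1 := by linarith [norm_nonneg v]
    exact one_le_mul_of_one_le_of_one_le hB this
  have hb : ∀ j, ∀ t ∈ Icc (0:ℝ) 1, |g j t| ≤ A * (B'^j * (j ! * M j)) := by
    intro j t ht
    have h1 := (iteratedFDeriv ℝ j f (p + t • v)).le_opNorm (fun _ => v)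
    have h2 := hf.2 j _ (hmem t ht)
    have hMj := hM.pos j
    simp only [Finset.prod_const, Finset.card_univ, Fintype.card_fin] at h1
    calc |g j t| ≤ ‖iteratedFDeriv ℝ j f (p + t • v)‖ * ‖v‖^j := h1
      _ ≤ (A * B^j * (j ! * M j)) * (‖v‖+1)^j := by gcongr; linarith
      _ = _ := by rw [mul_pow]; ring
  have := bang hM hB' hA hd hb (fun j => by simpa [hg] using h0 j)
  simpa [hg, hv] using this

/-- Identity theorem. -/
lemma QB.eq_zero (hM : Wt M) {f : E → ℝ} {s : Set E} (hs : IsOpen s) (hc : Convex ℝ s) {A B : ℝ} (hA : 0 ≤ A) (hB : 1 ≤ B)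
    (hf : QB M f s A B) {p : E} (hp : p ∈ s) (h0 : f =ᶠ[𝓝 p] 0) : EqOn f 0 s := by
  intro q hq
  refine hf.eq_zero_of_flat hM hs hc hA hB hp hq fun n => ?_
  rw [(h0.iteratedFDeriv ℝ n).eq_of_nhds]
  have : (0 : E → ℝ) = fun _ => 0 := rfl
  rw [this]; simp

lemma QA.ball {f : E → ℝ} {x : E} (hf : QA M f x) : ∃ r > 0, ∃ A B : ℝ, 0 ≤ A ∧ 1 ≤ B ∧ QB M f (Metric.ball x r) A B := by
  obtain ⟨s, hs, hx, A, B, hA, hB, hb⟩ := hf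
  obtain ⟨r, hr, h⟩ := Metric.isOpen_iff.1 hs x hx
  exact ⟨r, hr, A, B, hA, hB, hb.subset h⟩

/-- The ring of germs is a domain. -/
lemma QA.mul_eq_zero (hM : Wt M) {f g : E → ℝ} {x : E} (hf : QA M f x) (hg : QA M g x)
    (h : ∀ᶠ y in 𝓝 x, f y * g y = 0) : f =ᶠ[𝓝 x] 0 ∨ g =ᶠ[𝓝 x] 0 := by
  by_contra hcon
  push Not at hcon
  obtain ⟨hf0, hg0⟩ := hcon
  obtain ⟨r, hr, A, B, hA, hB, hb⟩ := hg.ball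
  have hev := hf.eventually
  obtain ⟨y, ⟨⟨hy1, hy2⟩, hy3⟩, hy0⟩ : ∃ y, ((y ∈ Metric.ball x r ∧ (∀ᶠ z in 𝓝 y, f z * g z = 0)) ∧ QA M f y) ∧ f y ≠ 0 := by
    by_contra hc; push Not at hc
    apply hf0
    filter_upwards [Metric.ball_mem_nhds x hr, eventually_eventually_nhds.2 h, hev] with y h1 h2 h3
    exact hc y ⟨⟨h1, h2⟩, h3⟩
  have hgy : g =ᶠ[𝓝 y] 0 := by
    filter_upwards [hy2, hy3.continuousAt.eventually_ne hy0] with z hz hz'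
    simpa [hz'] using hz
  have := hb.eq_zero hM isOpen_ball (convex_ball x r) hA hB hy1 hgy
  apply hg0
  filter_upwards [Metric.ball_mem_nhds x hr] with z hz using this hz

end Loj


namespace Loj
open Set Filter Topology Metric
open scoped ContDiff Nat

variable {M : ℕ → ℝ}
variable {E : Type} [NormedAddCommGroup E] [NormedSpace ℝ E]

lemma par_fderiv {F : Type} [NormedAddCommGroup F] [NormedSpace ℝ F] {V : Set ℝ} (hV : IsOpen V) {s : Set E}
    (hs : IsOpen s) {Φ : ℝ → E → F}
    (hΦ : ContDiffOn ℝ ∞ (fun p : ℝ × E => Φ p.1 p.2) (V ×ˢ s)) :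
    ∃ Φ' : ℝ → E → (E →L[ℝ] F), ContDiffOn ℝ ∞ (fun p : ℝ × E => Φ' p.1 p.2) (V ×ˢ s) ∧
      ∀ σ ∈ V, ∀ x ∈ s, HasFDerivAt (Φ σ) (Φ' σ x) x := by
  have hO : IsOpen (V ×ˢ s) := hV.prod hs
  refine ⟨fun σ x => (fderiv ℝ (fun p : ℝ × E => Φ p.1 p.2) (σ, x)).comp (ContinuousLinearMap.inr ℝ ℝ E), ?_, ?_⟩
  · have := hΦ.fderiv_of_isOpen (m := ∞) hO (by simp)
    exact this.clm_comp contDiffOn_const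
  · intro σ hσ x hx
    have h1 : HasFDerivAt (fun p : ℝ × E => Φ p.1 p.2) (fderiv ℝ (fun p : ℝ × E => Φ p.1 p.2) (σ, x)) (σ, x) :=
      ((hΦ.contDiffAt (hO.mem_nhds ⟨hσ, hx⟩)).differentiableAt (by simp)).hasFDerivAt
    have h2 : HasFDerivAt (fun y : E => (σ, y)) (ContinuousLinearMap.inr ℝ ℝ E) x := hasFDerivAt_prodMk_right σ x
    exact HasFDerivAt.comp x h1 h2

lemma par_int (m : ℕ) : ∀ {F : Type} [NormedAddCommGroup F] [NormedSpace ℝ F] [CompleteSpace F] {V : Set ℝ}, IsOpen V →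
    Icc (0:ℝ) 1 ⊆ V → ∀ {s : Set E}, IsOpen s → ∀ {Φ : ℝ → E → F} {b : ℕ → ℝ},
    ContDiffOn ℝ ∞ (fun p : ℝ × E => Φ p.1 p.2) (V ×ˢ s) →
    (∀ k, ∀ σ ∈ V, ∀ x ∈ s, ‖iteratedFDeriv ℝ k (Φ σ) x‖ ≤ b k) →
    ContDiffOn ℝ m (fun x => ∫ σ in (0:ℝ)..1, Φ σ x) s ∧
      ∀ x ∈ s, ‖iteratedFDeriv ℝ m (fun x => ∫ σ in (0:ℝ)..1, Φ σ x) x‖ ≤ b m := by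
  have key : ∀ {F : Type} [NormedAddCommGroup F] [NormedSpace ℝ F] [CompleteSpace F] {V : Set ℝ}, IsOpen V →
    Icc (0:ℝ) 1 ⊆ V → ∀ {s : Set E}, IsOpen s → ∀ {Φ : ℝ → E → F} {b : ℕ → ℝ},
    ContDiffOn ℝ ∞ (fun p : ℝ × E => Φ p.1 p.2) (V ×ˢ s) →
    (∀ k, ∀ σ ∈ V, ∀ x ∈ s, ‖iteratedFDeriv ℝ k (Φ σ) x‖ ≤ b k) → 
    ∃ Φ' : ℝ → E → (E →L[ℝ] F), ContDiffOn ℝ ∞ (fun p : ℝ × E => Φ' p.1 p.2) (V ×ˢ s) ∧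
     (∀ k, ∀ σ ∈ V, ∀ x ∈ s, ‖iteratedFDeriv ℝ k (Φ' σ) x‖ ≤ b (k+1)) ∧
      ∀ x ∈ s, HasFDerivAt (fun x => ∫ σ in (0:ℝ)..1, Φ σ x) (∫ σ in (0:ℝ)..1, Φ' σ x) x := by
    intro F _ _ _ V hV hIV s hs Φ b hΦ hb
    obtain ⟨Φ', hΦ', hd⟩ := par_fderiv hV hs hΦ
    have hb' : ∀ k, ∀ σ ∈ V, ∀ x ∈ s, ‖iteratedFDeriv ℝ k (Φ' σ) x‖ ≤ b (k+1) := by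
      intro k σ hσ x hx
      have : Φ' σ =ᶠ[𝓝 x] fderiv ℝ (Φ σ) := by
        filter_upwards [hs.mem_nhds hx] with y hy using (hd σ hσ y hy).fderiv.symm
      rw [(this.iteratedFDeriv ℝ k).eq_of_nhds, norm_iteratedFDeriv_fderiv]
      exact hb _ σ hσ x hx
    refine ⟨Φ', hΦ', hb', fun x hx => ?_⟩
    have hcont : ∀ {G : Type} [NormedAddCommGroup G] {Ψ : ℝ → E → G} (_ : ContinuousOn (fun p : ℝ × E => Ψ p.1 p.2) (V ×ˢ s)),
        ∀ y ∈ s, ContinuousOn (fun σ => Ψ σ y) (uIcc (0:ℝ) 1) := by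
      intro G _ Ψ hΨ y hy
      rw [uIcc_of_le zero_le_one]
      exact hΨ.comp (f := fun σ : ℝ => (σ, y)) (by fun_prop) (fun σ hσ => ⟨hIV hσ, hy⟩)
    have hmemV : ∀ σ ∈ uIoc (0:ℝ) 1, σ ∈ V := by
      intro σ hσ
      rw [uIoc_of_le zero_le_one] at hσ
      exact hIV ⟨hσ.1.le, hσ.2⟩
    refine intervalIntegral.hasFDerivAt_integral_of_dominated_of_fderiv_le (F := fun x σ => Φ σ x) (F' := fun x σ => Φ' σ x)
      (bound := fun _ => b 1) (s := s) (hs.mem_nhds hx) ?_ ?_ ?_ ?_ ?_ ?_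
    · filter_upwards [hs.mem_nhds hx] with y hy
      exact ((hcont hΦ.continuousOn y hy).mono uIoc_subset_uIcc).aestronglyMeasurable measurableSet_uIoc
    · exact (hcont hΦ.continuousOn x hx).intervalIntegrable
    · exact ((hcont hΦ'.continuousOn x hx).mono uIoc_subset_uIcc).aestronglyMeasurable measurableSet_uIoc
    · refine Eventually.of_forall fun σ hσ y hy => ?_
      have := hb' 0 σ (hmemV σ hσ) y hy
      simpa using this
    · exact intervalIntegrable_const
    · exact Eventually.of_forall fun σ hσ y hy => hd σ (hmemV σ hσ) y hy
  induction m with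
  | zero =>
    intro F _ _ _ V hV hIV s hs Φ b hΦ hb
    obtain ⟨Φ', -, -, hd⟩ := key hV hIV hs hΦ hb
    refine ⟨?_, fun x hx => ?_⟩
    · simp only [Nat.cast_zero, contDiffOn_zero]
      exact fun x hx => (hd x hx).continuousAt.continuousWithinAt
    · simp only [norm_iteratedFDeriv_zero]
      have := intervalIntegral.norm_integral_le_of_norm_le_const (a := 0) (b := 1) (f := fun σ => Φ σ x) (C := b 0) (by
        intro σ hσ
        rw [uIoc_of_le zero_le_one] at hσ
        simpa using hb 0 σ (hIV ⟨hσ.1.le, hσ.2⟩) x hx)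
      simpa using this
  | succ m ih =>
    intro F _ _ _ V hV hIV s hs Φ b hΦ hb
    obtain ⟨Φ', hΦ', hb', hd⟩ := key hV hIV hs hΦ hb
    obtain ⟨h1, h2⟩ := ih (F := E →L[ℝ] F) hV hIV hs hΦ' hb'
    refine ⟨?_, fun x hx => ?_⟩
    · push_cast
      rw [contDiffOn_succ_iff_fderiv_of_isOpen hs]
      refine ⟨fun x hx => (hd x hx).differentiableAt.differentiableWithinAt, by simp, ?_⟩
      exact h1.congr fun x hx => (hd x hx).fderiv
    · rw [← norm_iteratedFDeriv_fderiv]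
      have : fderiv ℝ (fun x => ∫ σ in (0:ℝ)..1, Φ σ x) =ᶠ[𝓝 x] fun x => ∫ σ in (0:ℝ)..1, Φ' σ x := by
        filter_upwards [hs.mem_nhds hx] with y hy using (hd y hy).fderiv
      rw [(this.iteratedFDeriv ℝ m).eq_of_nhds]
      exact h2 x hx

set_option maxHeartbeats 1000000 in
/-- Hadamard division. -/
lemma hadamard (hM : Wt M) {f : E → ℝ} (hf : QA M f 0) (l : E →L[ℝ] ℝ) (e : E) :
    ∃ g : E → ℝ, QA M g 0 ∧ ∀ᶠ x in 𝓝 0, f x = f (x - l x • e) + l x * g x := by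
  obtain ⟨r, hr, A, B, hA, hB, hb⟩ := hf.ball
  obtain ⟨A', B', hA', hB', hb'⟩ := hb.fderiv hM isOpen_ball hA hB
  -- linear maps
  set T : ℝ → E →L[ℝ] E := fun σ => ContinuousLinearMap.id ℝ E - (1 - σ) • l.smulRight e with hT
  have hTa : ∀ σ x, T σ x = x - ((1 - σ) * l x) • e := by intro σ x; simp [hT, mul_smul]
  set C : ℝ := 1 + 2 * ‖l.smulRight e‖ with hC
  have hC1 : 1 ≤ C := by rw [hC]; linarith [norm_nonneg (l.smulRight e)]
  set V : Set ℝ := Ioo (-1) 2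
  have hTn : ∀ σ ∈ V, ‖T σ‖ ≤ C := by
    intro σ hσ
    refine (norm_sub_le _ _).trans ?_
    have h1 : |1 - σ| ≤ 2 := by rw [abs_le]; constructor <;> linarith [hσ.1, hσ.2]
    rw [norm_smul, hC, Real.norm_eq_abs]
    gcongr
    exact ContinuousLinearMap.norm_id_le
  set s : Set E := Metric.ball 0 (r / C)
  have hC0 : 0 < C := by linarith
  have hmaps : ∀ σ ∈ V, ∀ x ∈ s, T σ x ∈ Metric.ball (0:E) r := by
    intro σ hσ x hx
    rw [mem_ball_zero_iff] at *
    have hx' : ‖x‖ < r / C := by simpa [s] using hx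
    calc ‖T σ x‖ ≤ C * ‖x‖ := ((T σ).le_opNorm x).trans (by gcongr; exact hTn σ hσ)
      _ < C * (r / C) := by gcongr
      _ = r := by field_simp
  set Ψ : E → ℝ := fun x => _root_.fderiv ℝ f x e with hΨ
  have hΨs : ContDiffOn ℝ ∞ Ψ (Metric.ball 0 r) := hb'.1.clm_apply contDiffOn_const
  have hΨb : ∀ n, ∀ x ∈ Metric.ball (0:E) r, ‖iteratedFDeriv ℝ n Ψ x‖ ≤ (‖e‖ * A') * B'^n * (n ! * M n) := by
    intro n x hx
    have h1 := ContinuousLinearMap.norm_iteratedFDeriv_comp_left (ContinuousLinearMap.apply ℝ ℝ e)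
      (hb'.1.contDiffAt (isOpen_ball.mem_nhds hx)) (n := n) (by exact_mod_cast le_top)
    have h2 : ‖(ContinuousLinearMap.apply ℝ ℝ e : (E →L[ℝ] ℝ) →L[ℝ] ℝ)‖ ≤ ‖e‖ := by
      refine ContinuousLinearMap.opNorm_le_bound _ (norm_nonneg _) fun L => ?_
      simpa [mul_comm] using L.le_opNorm e
    have h3 := hb'.2 n x hx
    calc ‖iteratedFDeriv ℝ n Ψ x‖ ≤ ‖e‖ * (A' * B'^n * (n ! * M n)) := h1.trans (by gcongr)
      _ = _ := by ring
  set Φ : ℝ → E → ℝ := fun σ x => Ψ (T σ x) with hΦ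
  have hΦs : ContDiffOn ℝ ∞ (fun p : ℝ × E => Φ p.1 p.2) (V ×ˢ s) := by
    have : ContDiff ℝ ∞ (fun p : ℝ × E => T p.1 p.2) := by
      simp only [hTa]; fun_prop
    exact hΨs.comp this.contDiffOn fun p hp => hmaps p.1 hp.1 p.2 hp.2
  have hΦb : ∀ k, ∀ σ ∈ V, ∀ x ∈ s, ‖iteratedFDeriv ℝ k (Φ σ) x‖ ≤ (‖e‖ * A') * (B' * C)^k * (k ! * M k) := by
    intro k σ hσ x hx
    have hmem := hmaps σ hσ x hx
    have h0 : iteratedFDerivWithin ℝ k (Ψ ∘ T σ) ((T σ) ⁻¹' Metric.ball 0 r) x =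
       (iteratedFDerivWithin ℝ k Ψ (Metric.ball 0 r) (T σ x)).compContinuousLinearMap fun _ => T σ :=
      (T σ).iteratedFDerivWithin_comp_right (hΨs) (isOpen_ball.uniqueDiffOn)
        (isOpen_ball.preimage (T σ).continuous).uniqueDiffOn hmem (by exact_mod_cast le_top)
    rw [iteratedFDerivWithin_of_isOpen _ (isOpen_ball.preimage (T σ).continuous) hmem, iteratedFDerivWithin_of_isOpen _ isOpen_ball hmem] at h0
    have h1 : iteratedFDeriv ℝ k (Φ σ) x = (iteratedFDeriv ℝ k Ψ (T σ x)).compContinuousLinearMap fun _ => T σ := h0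
    rw [h1]
    refine (ContinuousMultilinearMap.norm_compContinuousLinearMap_le _ _).trans ?_
    have h2 := hΨb k _ hmem
    have h3 := hTn σ hσ
    have := (hM.pos k).le
    simp only [Finset.prod_const, Finset.card_univ, Fintype.card_fin]
    calc _ ≤ (‖e‖ * A') * B'^k * (k ! * M k) * C^k := by gcongr
      _ = _ := by rw [mul_pow]; ring
  have hIV : Icc (0:ℝ) 1 ⊆ V := fun t ht => ⟨by linarith [ht.1], by linarith [ht.2]⟩
  have hs0 : (0:E) ∈ s := by simp only [s, mem_ball_self (by positivity : 0 < r / C)]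
  refine ⟨fun x => ∫ σ in (0:ℝ)..1, Φ σ x, ⟨s, isOpen_ball, hs0, ‖e‖ * A', B' * C,
    by positivity, one_le_mul_of_one_le_of_one_le hB' hC1, ?_, ?_⟩, ?_⟩
  · rw [contDiffOn_infty]
    intro n
    exact (par_int n isOpen_Ioo hIV isOpen_ball hΦs hΦb).1
  · intro n y hy
    exact (par_int n isOpen_Ioo hIV isOpen_ball hΦs hΦb).2 y hy
  · filter_upwards [isOpen_ball.mem_nhds hs0] with x hx
    have hd : ∀ σ ∈ uIcc (0:ℝ) 1, HasDerivAt (fun σ => f (T σ x)) (l x * Φ σ x) σ := by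
      intro σ hσ
      rw [uIcc_of_le zero_le_one] at hσ
      have h1 : HasFDerivAt f (_root_.fderiv ℝ f (T σ x)) (T σ x) :=
        ((hb.1.contDiffAt (isOpen_ball.mem_nhds (hmaps σ (hIV hσ) x hx))).differentiableAt (by simp)).hasFDerivAt
      have h2 : HasDerivAt (fun σ => T σ x) (l x • e) σ := by
        simp only [hTa]
        have := ((((hasDerivAt_id σ).const_sub 1).mul_const (l x)).smul_const e).const_sub x
        simpa using this
      have h3 := h1.comp_hasDerivAt σ h2
      have h4 : _root_.fderiv ℝ f (T σ x) (l x • e) = l x * Φ σ x := by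
        rw [map_smul, smul_eq_mul]
      rw [← h4]
      exact h3
    have hc : ContinuousOn (fun σ => Φ σ x) (uIcc (0:ℝ) 1) := by
      rw [uIcc_of_le zero_le_one]
      exact hΦs.continuousOn.comp (f := fun σ : ℝ => (σ, x)) (by fun_prop) (fun σ hσ => ⟨hIV hσ, hx⟩)
    have := intervalIntegral.integral_eq_sub_of_hasDerivAt hd ((continuousOn_const.mul hc).intervalIntegrable)
    rw [intervalIntegral.integral_const_mul] at this
    simp only [hTa] at this
    simp at this
    rw [this]; ring

end Loj


namespace Loj
open Set Filter Topology Metric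
open scoped ContDiff Nat

variable {M : ℕ → ℝ}
variable {E E₁ : Type} [NormedAddCommGroup E] [NormedSpace ℝ E] [NormedAddCommGroup E₁] [NormedSpace ℝ E₁]

lemma QA.ev_diff {F : Type} [NormedAddCommGroup F] [NormedSpace ℝ F] {f : E → F} {x : E} (hf : QA M f x) :
    ∀ᶠ y in 𝓝 x, DifferentiableAt ℝ f y := by
  filter_upwards [hf.eventually] with y hy using hy.contDiffAt.differentiableAt (by simp)

/-- Implicit function theorem in the class. -/
lemma implicit (hM : Wt M) [CompleteSpace E₁] {A : E → ℝ} (hA : QA M A 0) (hA0 : A 0 = 0) (ι : E₁ →L[ℝ] E) (e : E)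
    (he : fderiv ℝ A 0 e ≠ 0) :
    ∃ p : E₁ → ℝ, QA M p 0 ∧ p 0 = 0 ∧ ∀ᶠ v in 𝓝 0, A (ι v + p v • e) = 0 := by
  set L : E₁ × ℝ →L[ℝ] E := ι.comp (ContinuousLinearMap.fst ℝ E₁ ℝ) + (ContinuousLinearMap.snd ℝ E₁ ℝ).smulRight e with hL
  have hLa : ∀ q, L q = ι q.1 + q.2 • e := by intro q; simp [hL]
  set f : E₁ × ℝ → ℝ := fun q => A (L q) with hf
  have hA' : QA M A (L (0, 0)) := by simpa [hLa] using hA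
  have cdf : ContDiffAt ℝ ∞ f ((0 : E₁), (0:ℝ)) := hA'.contDiffAt.comp _ L.contDiff.contDiffAt
  have hdA : DifferentiableAt ℝ A (L (0, 0)) := hA'.contDiffAt.differentiableAt (by simp)
  have hfd : fderiv ℝ f ((0 : E₁), (0:ℝ)) = (fderiv ℝ A (L (0,0))).comp L :=
    (hdA.hasFDerivAt.comp _ L.hasFDerivAt).fderiv
  have if₂ : (fderiv ℝ f ((0 : E₁), (0:ℝ)) ∘L .inr ℝ E₁ ℝ).IsInvertible := by
    refine ⟨ContinuousLinearEquiv.smulLeft (Units.mk0 _ he), ?_⟩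
    ext
    rw [hfd]
    simp [hLa]
  set p := cdf.implicitFunction (by simp) if₂ with hp
  have hp0 : p 0 = 0 := cdf.implicitFunction_apply_self (by simp) if₂
  have hpe : ∀ᶠ v in 𝓝 (0 : E₁), A (ι v + p v • e) = 0 := by
    filter_upwards [cdf.eventually_apply_implicitFunction (by simp) if₂] with v hv
    have h2 : f ((0:E₁), (0:ℝ)) = 0 := by simp only [hf, hLa]; simp [hA0]
    rw [h2] at hv
    have h3 : f (v, p v) = A (ι v + p v • e) := by simp only [hf, hLa]
    rw [← h3]; exact hv
  have hpc : ContDiffAt ℝ ∞ p 0 := cdf.contDiffAt_implicitFunction (by simp) if₂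
  set g : E₁ → E := fun v => ι v + p v • e with hg
  have hg0 : g 0 = 0 := by simp [hg, hp0]
  set H : E → (E₁ →L[ℝ] (E × ℝ)) := fun x => ContinuousLinearMap.prod (ι - (fderiv ℝ A x e)⁻¹ • ((fderiv ℝ A x).comp ι).smulRight e)
    (-((fderiv ℝ A x e)⁻¹ • ((fderiv ℝ A x).comp ι))) with hH
  have hpd : ∀ᶠ v in 𝓝 (0:E₁), DifferentiableAt ℝ p v := by
    have := (hpc.of_le (m := 1) (by simp)).eventually (by simp)
    filter_upwards [this] with v hv using hv.differentiableAt (by simp)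
  have hgc : ContinuousAt g 0 := by
    have := hpc.continuousAt
    fun_prop
  have hnz : ∀ᶠ v in 𝓝 (0:E₁), fderiv ℝ A (g v) e ≠ 0 := by
    have h1 : ContinuousAt (fun x => fderiv ℝ A x e) (g 0) := by
      rw [hg0]; exact (hA.fderiv hM).continuousAt.clm_apply continuousAt_const
    exact (ContinuousAt.comp (f := g) (x := 0) h1 hgc).eventually_ne (by simpa [hg0] using he)
  have hdAv : ∀ᶠ v in 𝓝 (0:E₁), DifferentiableAt ℝ A (g v) :=
    hgc.eventually (by rw [hg0]; exact hA.ev_diff)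
  have hdp : ∀ᶠ v in 𝓝 (0:E₁), HasFDerivAt p (-((fderiv ℝ A (g v) e)⁻¹ • ((fderiv ℝ A (g v)).comp ι))) v := by
    filter_upwards [hpd, hnz, hdAv, eventually_eventually_nhds.2 hpe] with v h1 h2 h3 h4
    have h5 : HasFDerivAt g (ι + (fderiv ℝ p v).smulRight e) v :=
      ι.hasFDerivAt.add (h1.hasFDerivAt.smul_const e)
    have h6 := h3.hasFDerivAt.comp v h5
    have h7 : HasFDerivAt (A ∘ g) (0 : E₁ →L[ℝ] ℝ) v :=
      (hasFDerivAt_const (0:ℝ) v).congr_of_eventuallyEq (by filter_upwards [h4] with w hw using hw)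
    have h8 := h6.unique h7
    refine h1.hasFDerivAt.congr_fderiv ?_
    ext w
    have h9 := DFunLike.congr_fun h8 w
    simp at h9 ⊢
    field_simp
    linarith
  have hode : ∀ᶠ v in 𝓝 (0:E₁), HasFDerivAt (fun v => (g v, p v)) ((fun q : E × ℝ => H q.1) (g v, p v)) v := by
    filter_upwards [hdp] with v hv
    refine HasFDerivAt.prodMk ?_ hv
    have := ι.hasFDerivAt (x := v) |>.add (hv.smul_const e)
    refine HasFDerivAt.congr_fderiv (f := g) this ?_
    ext w
    simp [sub_eq_add_neg, mul_smul]
  have hHQ : QA M H 0 := by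
    have h1 : QA M (fun x => fderiv ℝ A x e) 0 := (hA.fderiv hM).clm_comp hM (ContinuousLinearMap.apply ℝ ℝ e)
    have h2 : QA M (fun x => (fderiv ℝ A x e)⁻¹) 0 := QA.comp hM (g := fun y : ℝ => y⁻¹) (f := fun x => fderiv ℝ A x e) (QA.inv hM he) h1
    have h3 : QA M (fun x => (fderiv ℝ A x).comp ι) 0 := (hA.fderiv hM).clm_comp hM ((ContinuousLinearMap.compL ℝ E₁ E ℝ).flip ι)
    have h4 : QA M (fun x => (fderiv ℝ A x e)⁻¹ • ((fderiv ℝ A x).comp ι)) 0 := QA.bilin hM (ContinuousLinearMap.lsmul ℝ ℝ) h2 h3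
    -- H is affine in this
    have h5 := h4.clm_comp hM ((ContinuousLinearMap.compL ℝ E₁ ℝ (E × ℝ)) (ContinuousLinearMap.prod (ContinuousLinearMap.toSpanSingleton ℝ e) (ContinuousLinearMap.id ℝ ℝ)))
    have h6 := (QA.const hM (ContinuousLinearMap.prod ι (0 : E₁ →L[ℝ] ℝ)) (0:E)).sub hM h5
    have : H = fun y => ContinuousLinearMap.prod ι (0 : E₁ →L[ℝ] ℝ) - ((ContinuousLinearMap.compL ℝ E₁ ℝ (E × ℝ)) (ContinuousLinearMap.prod (ContinuousLinearMap.toSpanSingleton ℝ e) (ContinuousLinearMap.id ℝ ℝ)))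
      ((fderiv ℝ A y e)⁻¹ • ((fderiv ℝ A y).comp ι)) := by
      funext x
      ext w <;> simp [hH, mul_smul]
    rw [this]; exact h6
  have hfin := QA.ode hM (f := fun v => (g v, p v)) (H := fun q : E × ℝ => H q.1) hode (by
    have : QA M (fun q : E × ℝ => q.1) (g 0, p 0) := QA.clm hM (ContinuousLinearMap.fst ℝ E ℝ) _
    refine QA.comp hM (g := H) (f := fun q : E × ℝ => q.1) ?_ this
    simpa [hg0] using hHQ)
  exact ⟨p, hfin.clm_comp hM (ContinuousLinearMap.snd ℝ E ℝ), hp0, hpe⟩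

/-- iterated directional derivative -/
noncomputable def dl (e : E) (F : E → ℝ) : E → ℝ := fun x => lineDeriv ℝ F x e

lemma dl_comp {e : E} {e' : E₁} {T : E₁ → E} (hT : ∀ x (s : ℝ), T (x + s • e') = T x + s • e) (F : E → ℝ) :
    dl e' (F ∘ T) = (dl e F) ∘ T := by
  funext x
  simp [dl, lineDeriv, hT]

lemma dl_comp_iter {e : E} {e' : E₁} {T : E₁ → E} (hT : ∀ x (s : ℝ), T (x + s • e') = T x + s • e) (F : E → ℝ) (k : ℕ) :
    (dl e')^[k] (F ∘ T) = ((dl e)^[k] F) ∘ T := by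
  induction k with
  | zero => rfl
  | succ k ih => rw [Function.iterate_succ_apply', ih, dl_comp hT, Function.iterate_succ_apply']

lemma dl_congr {e : E} {F G : E → ℝ} {x : E} (h : F =ᶠ[𝓝 x] G) : dl e F =ᶠ[𝓝 x] dl e G := by
  filter_upwards [eventually_eventually_nhds.2 h] with y hy
  exact Filter.EventuallyEq.lineDeriv_eq hy

lemma dl_congr_iter {e : E} {F G : E → ℝ} {x : E} (h : F =ᶠ[𝓝 x] G) (k : ℕ) : (dl e)^[k] F =ᶠ[𝓝 x] (dl e)^[k] G := by
  induction k with
  | zero => exact h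
  | succ k ih => rw [Function.iterate_succ_apply', Function.iterate_succ_apply']; exact dl_congr ih

lemma dl_eq {e : E} {F : E → ℝ} {x : E} (hF : QA M F x) : dl e F =ᶠ[𝓝 x] fun y => fderiv ℝ F y e := by
  filter_upwards [hF.ev_diff] with y hy using hy.lineDeriv_eq_fderiv

lemma QA.dl (hM : Wt M) {e : E} {F : E → ℝ} {x : E} (hF : QA M F x) : QA M (dl e F) x :=
  ((hF.fderiv hM).clm_comp hM (ContinuousLinearMap.apply ℝ ℝ e)).congr (dl_eq hF)

lemma QA.dl_iter (hM : Wt M) {e : E} {F : E → ℝ} {x : E} (hF : QA M F x) (k : ℕ) : QA M ((Loj.dl e)^[k] F) x := by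
  induction k with
  | zero => exact hF
  | succ k ih => rw [Function.iterate_succ_apply']; exact ih.dl hM

lemma dl_iter_eq {e : E} {F : E → ℝ} {x : E} (hF : QA M F x) (k : ℕ) :
    (dl e)^[k] F =ᶠ[𝓝 x] fun y => iteratedFDeriv ℝ k F y (fun _ => e) := by
  induction k with
  | zero => exact Eventually.of_forall fun y => by simp
  | succ k ih =>
    rw [Function.iterate_succ_apply']
    refine (dl_congr ih).trans ?_
    filter_upwards [hF.eventually] with y hy
    have hd : DifferentiableAt ℝ (iteratedFDeriv ℝ k F) y :=
      hy.contDiffAt.differentiableAt_iteratedFDeriv (by exact_mod_cast ENat.natCast_lt_top k)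
    have h1 := (ContinuousMultilinearMap.apply ℝ (fun _ : Fin k => E) ℝ (fun _ => e)).hasFDerivAt.comp y hd.hasFDerivAt
    have h2 := h1.hasLineDerivAt e
    exact h2.lineDeriv

lemma dl_add {e : E} {F G : E → ℝ} {x : E} (hF : QA M F x) (hG : QA M G x) :
    dl e (fun y => F y + G y) =ᶠ[𝓝 x] fun y => dl e F y + dl e G y := by
  filter_upwards [hF.ev_diff, hG.ev_diff] with y h1 h2
  have h3 : DifferentiableAt ℝ (fun y => F y + G y) y := h1.add h2
  simp only [dl]
  rw [h3.lineDeriv_eq_fderiv, h1.lineDeriv_eq_fderiv, h2.lineDeriv_eq_fderiv, fderiv_fun_add h1 h2]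
  simp

lemma dl_mul {e : E} {F G : E → ℝ} {x : E} (hF : QA M F x) (hG : QA M G x) :
    dl e (fun y => F y * G y) =ᶠ[𝓝 x] fun y => dl e F y * G y + F y * dl e G y := by
  filter_upwards [hF.ev_diff, hG.ev_diff] with y h1 h2
  have h3 : DifferentiableAt ℝ (fun y => F y * G y) y := h1.mul h2
  simp only [dl]
  rw [h3.lineDeriv_eq_fderiv, h1.lineDeriv_eq_fderiv, h2.lineDeriv_eq_fderiv, fderiv_fun_mul h1 h2]
  simp; ring

end Loj


namespace Loj
open Set Filter Topology Metric
open scoped ContDiff Nat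

variable {M : ℕ → ℝ}
variable {E : Type} [NormedAddCommGroup E] [NormedSpace ℝ E]

lemma dl_zero_dir (F : E → ℝ) : dl (0:E) F = fun _ => 0 := by
  funext x; simp [dl, lineDeriv]

lemma dl_l (l : E →L[ℝ] ℝ) (e : E) (hle : l e = 1) (x : E) : dl e (fun y => l y) x = 1 := by
  simp only [dl]
  rw [l.differentiableAt.lineDeriv_eq_fderiv]; simp [hle]

lemma dl_iter_lmul (hM : Wt M) {G : E → ℝ} (hG : QA M G 0) (l : E →L[ℝ] ℝ) (e : E) (hle : l e = 1) (k : ℕ) :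
    (dl e)^[k+1] (fun y => l y * G y) =ᶠ[𝓝 0] fun y => (k+1) * (dl e)^[k] G y + l y * (dl e)^[k+1] G y := by
  induction k with
  | zero =>
    have := dl_mul (e := e) (QA.clm hM l 0) hG
    filter_upwards [this] with y hy
    simp only [Function.iterate_succ, Function.iterate_zero, Function.comp, id]
    rw [hy, dl_l l e hle]; simp
  | succ k ih =>
    rw [Function.iterate_succ_apply']
    have h1 := dl_congr (e := e) ih
    have h2 := dl_add (e := e) ((QA.const hM ((k:ℝ)+1) (0:E)).mul hM (hG.dl_iter hM (e := e) k))
      ((QA.clm hM l 0).mul hM (hG.dl_iter hM (e := e) (k+1)))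
    have h3 := dl_mul (e := e) (QA.clm hM l 0) (hG.dl_iter hM (e := e) (k+1))
    have h4 := dl_mul (e := e) (QA.const hM ((k:ℝ)+1) (0:E)) (hG.dl_iter hM (e := e) k)
    have hc : ∀ y, dl e (fun _ : E => (k:ℝ)+1) y = 0 := by
      intro y; simp [dl, lineDeriv]
    filter_upwards [h1, h2, h3, h4] with y g1 g2 g3 g4
    rw [g1, g2, g3, g4, dl_l l e hle, hc]
    rw [← Function.iterate_succ_apply' (dl e) k G, ← Function.iterate_succ_apply' (dl e) (k+1) G]
    push_cast; ring

/-- projection along `e` -/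
def rr (l : E →L[ℝ] ℝ) (e : E) (x : E) : E := x - l x • e

lemma rr_zero (l : E →L[ℝ] ℝ) (e : E) : rr l e 0 = 0 := by simp [rr]

lemma rr_tendsto (l : E →L[ℝ] ℝ) (e : E) : Tendsto (rr l e) (𝓝 0) (𝓝 0) := by
  have : Continuous (rr l e) := by unfold rr; fun_prop
  simpa [rr_zero] using this.tendsto 0

lemma QA.rr (hM : Wt M) (l : E →L[ℝ] ℝ) (e x : E) : QA M (rr l e) x := by
  have := QA.clm hM (ContinuousLinearMap.id ℝ E - l.smulRight e) x
  have h : (fun y => (ContinuousLinearMap.id ℝ E - l.smulRight e) y) = Loj.rr l e := by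
    funext y; simp [Loj.rr]
  rw [← h]; exact this

lemma l_rr (l : E →L[ℝ] ℝ) (e : E) (hle : l e = 1) (x : E) : l (rr l e x) = 0 := by simp [rr, hle]

lemma expansion (hM : Wt M) (l : E →L[ℝ] ℝ) (e : E) (hle : l e = 1) (d : ℕ) : ∀ {F : E → ℝ}, QA M F 0 →
    ∃ u : E → ℝ, QA M u 0 ∧ u 0 = (dl e)^[d] F 0 / d ! ∧
      ∀ᶠ x in 𝓝 0, F x = ∑ i ∈ Finset.range d, (dl e)^[i] F (rr l e x) / i ! * (l x)^i + (l x)^d * u x := by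
  induction d with
  | zero =>
    intro F hF
    exact ⟨F, hF, by simp, Eventually.of_forall fun x => by simp⟩
  | succ d ih =>
    intro F hF
    obtain ⟨G, hG, hFG⟩ := hadamard hM hF l e
    have hr : QA M (fun x => F (rr l e x)) 0 := QA.comp hM (f := rr l e) (g := F) (by simpa [rr_zero] using hF) (QA.rr hM l e 0)
    have hlG : QA M (fun x => l x * G x) 0 := (QA.clm hM l 0).mul hM hG
    have h1 : dl e F =ᶠ[𝓝 0] dl e (fun x => l x * G x) := by
      have h2 : F =ᶠ[𝓝 0] fun x => F (rr l e x) + l x * G x := hFG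
      refine (dl_congr h2).trans ?_
      have h4 : dl e (F ∘ rr l e) = dl 0 F ∘ rr l e := dl_comp (by intro x s; simp [rr, hle]; module) F
      filter_upwards [dl_add (e := e) hr hlG] with y hy
      rw [hy]
      have : dl e (fun y => F (rr l e y)) y = 0 := by
        have h5 := congrFun h4 y
        rw [dl_zero_dir] at h5
        exact h5
      rw [this, zero_add]
    have h2 : ∀ k, ∀ᶠ x in 𝓝 0, (dl e)^[k+1] F (rr l e x) = (k+1) * (dl e)^[k] G (rr l e x) := by
      intro k
      have h3 : (dl e)^[k+1] F =ᶠ[𝓝 0] (dl e)^[k+1] (fun x => l x * G x) := by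
        rw [Function.iterate_succ_apply, Function.iterate_succ_apply]
        exact dl_congr_iter h1 k
      have h4 := h3.trans (dl_iter_lmul hM hG l e hle k)
      filter_upwards [(rr_tendsto l e).eventually h4] with x hx
      rw [hx, l_rr l e hle]; ring
    obtain ⟨u, hu, hu0, hGe⟩ := ih hG
    refine ⟨u, hu, ?_, ?_⟩
    · have := (h2 d).self_of_nhds
      rw [rr_zero] at this
      rw [hu0, this, Nat.factorial_succ]; push_cast
      field_simp
    · have h3 : ∀ᶠ x in 𝓝 0, ∀ k ∈ Finset.range d, (dl e)^[k+1] F (rr l e x) = (k+1) * (dl e)^[k] G (rr l e x) :=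
        (Finset.eventually_all _).2 fun k _ => h2 k
      filter_upwards [h3, hGe, hFG] with x g1 g2 g3
      rw [Finset.sum_range_succ', g3, g2]
      have : ∑ i ∈ Finset.range d, (dl e)^[i+1] F (rr l e x) / (i+1)! * (l x)^(i+1) =
          l x * ∑ i ∈ Finset.range d, (dl e)^[i] G (rr l e x) / i ! * (l x)^i := by
        rw [Finset.mul_sum]
        refine Finset.sum_congr rfl fun i hi => ?_
        rw [g1 i hi, Nat.factorial_succ]; push_cast
        field_simp
        ring
      rw [this]
      simp [rr]; ring

end Loj


namespace Loj
open Set Filter Topology Metric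
open scoped ContDiff Nat

variable {M : ℕ → ℝ} {n : ℕ}

/-- monomials -/
def mono (β : Fin n → ℕ) (x : Fin n → ℝ) : ℝ := ∏ i, x i ^ β i

lemma mono_add (β γ : Fin n → ℕ) (x : Fin n → ℝ) : mono (β + γ) x = mono β x * mono γ x := by
  simp [mono, pow_add, Finset.prod_mul_distrib]

lemma mono_smul (k : ℕ) (β : Fin n → ℕ) (x : Fin n → ℝ) : mono (k • β) x = mono β x ^ k := by
  simp [mono, Finset.prod_pow, pow_mul']

lemma mono_zero (x : Fin n → ℝ) : mono 0 x = 1 := by simp [mono]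

lemma mono_single (j : Fin n) (x : Fin n → ℝ) : mono (Pi.single j 1) x = x j := by
  unfold mono
  rw [Finset.prod_eq_single j]
  · simp
  · intro i _ hi; simp [Pi.single_apply, hi]
  · simp

lemma mono_eq_zero {β : Fin n → ℕ} {j : Fin n} (hj : β j ≠ 0) {x : Fin n → ℝ} (hx : x j = 0) : mono β x = 0 := by
  unfold mono
  exact Finset.prod_eq_zero (Finset.mem_univ j) (by simp [hx, hj])

lemma mono_ne_zero (β : Fin n → ℕ) {x : Fin n → ℝ} (hx : ∀ j, x j ≠ 0) : mono β x ≠ 0 := by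
  unfold mono
  exact Finset.prod_ne_zero_iff.2 fun j _ => pow_ne_zero _ (hx j)

lemma QA.coord (hM : Wt M) (j : Fin n) (x : Fin n → ℝ) : QA M (fun y : Fin n → ℝ => y j) x := (QA.id hM x).proj hM j

lemma QA.mono (hM : Wt M) (β : Fin n → ℕ) (x : Fin n → ℝ) : QA M (mono β) x :=
  QA.prod hM Finset.univ fun i _ => (QA.coord hM i x).pow hM (β i)

/-- monomial times unit -/
def Mon (M : ℕ → ℝ) (F : (Fin n → ℝ) → ℝ) : Prop :=
  ∃ (β : Fin n → ℕ) (u : (Fin n → ℝ) → ℝ), QA M u 0 ∧ u 0 ≠ 0 ∧ F =ᶠ[𝓝 0] fun x => mono β x * u x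

lemma Mon.congr {F G : (Fin n → ℝ) → ℝ} (hF : Mon M F) (h : G =ᶠ[𝓝 0] F) : Mon M G := by
  obtain ⟨β, u, h1, h2, h3⟩ := hF
  exact ⟨β, u, h1, h2, h.trans h3⟩

lemma Mon.qa (hM : Wt M) {F : (Fin n → ℝ) → ℝ} (hF : Mon M F) : QA M F 0 := by
  obtain ⟨β, u, h1, h2, h3⟩ := hF
  exact ((QA.mono hM β 0).mul hM h1).congr h3

lemma Mon.unit {u : (Fin n → ℝ) → ℝ} (hu : QA M u 0) (h0 : u 0 ≠ 0) : Mon M u :=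
  ⟨0, u, hu, h0, Eventually.of_forall fun x => by simp [mono_zero]⟩

lemma Mon.mono (hM : Wt M) (β : Fin n → ℕ) : Mon M (mono β) :=
  ⟨β, fun _ => 1, QA.const hM 1 0, one_ne_zero, Eventually.of_forall fun x => by simp⟩

lemma Mon.coord (hM : Wt M) (j : Fin n) : Mon M (fun x : Fin n → ℝ => x j) :=
  (Mon.mono hM (Pi.single j 1)).congr (Eventually.of_forall fun x => by simp [mono_single])

lemma Mon.mul (hM : Wt M) {F G : (Fin n → ℝ) → ℝ} (hF : Mon M F) (hG : Mon M G) : Mon M (fun x => F x * G x) := by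
  obtain ⟨β, u, h1, h2, h3⟩ := hF
  obtain ⟨γ, v, g1, g2, g3⟩ := hG
  refine ⟨β + γ, fun x => u x * v x, h1.mul hM g1, mul_ne_zero h2 g2, ?_⟩
  filter_upwards [h3, g3] with x a b
  rw [a, b, mono_add]; ring

lemma Mon.prod (hM : Wt M) {ι : Type} (s : Finset ι) {F : ι → (Fin n → ℝ) → ℝ} (hF : ∀ i ∈ s, Mon M (F i)) :
    Mon M (fun x => ∏ i ∈ s, F i x) := by
  classical
  induction s using Finset.induction_on with
  | empty => simpa using Mon.unit (QA.const hM (1:ℝ) 0) one_ne_zero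
  | insert a s ha ih =>
    simp only [Finset.prod_insert ha]
    exact (hF a (by simp)).mul hM (ih fun i hi => hF i (by simp [hi]))

lemma Mon.pow (hM : Wt M) {F : (Fin n → ℝ) → ℝ} (hF : Mon M F) (k : ℕ) : Mon M (fun x => F x ^ k) := by
  have := Mon.prod hM (Finset.range k) (F := fun _ => F) fun _ _ => hF
  simpa using this

lemma exists_pos {P : (Fin n → ℝ) → Prop} (h : ∀ᶠ x in 𝓝 0, P x) : ∃ δ > 0, ∀ x : Fin n → ℝ, (∀ j, |x j| ≤ δ) → P x := by
  obtain ⟨r, hr, h⟩ := Metric.eventually_nhds_iff.1 h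
  refine ⟨r/2, by positivity, fun x hx => h ?_⟩
  rw [dist_zero_right]
  refine lt_of_le_of_lt ((pi_norm_le_iff_of_nonneg (by positivity)).2 fun j => ?_) (half_lt_self hr)
  simpa using hx j

lemma Mon.ne_zero {F : (Fin n → ℝ) → ℝ} (hF : Mon M F) : ¬ F =ᶠ[𝓝 0] 0 := by
  obtain ⟨β, u, h1, h2, h3⟩ := hF
  intro h
  obtain ⟨δ, hδ, hx⟩ := exists_pos ((h.and h3).and (h1.continuousAt.eventually_ne h2))
  obtain ⟨⟨a, b⟩, c⟩ := hx (fun _ => δ) (by intro j; rw [abs_of_pos hδ])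
  rw [a] at b
  exact mul_ne_zero (mono_ne_zero β fun _ => hδ.ne') c b.symm

lemma update_eq (x : Fin n → ℝ) (j : Fin n) (s : ℝ) : Function.update x j s = x + (s - x j) • Pi.single j 1 := by
  ext i
  by_cases h : i = j
  · subst h; simp
  · simp [h]

lemma QA.update (hM : Wt M) {E : Type} [NormedAddCommGroup E] [NormedSpace ℝ E] {f : E → Fin n → ℝ} {q : E → ℝ} {x : E} (hf : QA M f x) (hq : QA M q x) (j : Fin n) :
    QA M (fun y => Function.update (f y) j (q y)) x := by
  refine QA.pi hM fun i => ?_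
  by_cases h : i = j
  · subst h; simpa using hq
  · simpa [h] using hf.proj hM i

lemma hadamard_coord (hM : Wt M) {F : (Fin n → ℝ) → ℝ} (hF : QA M F 0) (j : Fin n)
    (h0 : ∀ᶠ x in 𝓝 0, F (Function.update x j 0) = 0) : ∃ G, QA M G 0 ∧ F =ᶠ[𝓝 0] fun x => x j * G x := by
  obtain ⟨G, hG, h⟩ := hadamard hM hF (ContinuousLinearMap.proj j : (Fin n → ℝ) →L[ℝ] ℝ) (Pi.single j 1)
  refine ⟨G, hG, ?_⟩
  filter_upwards [h, h0] with x h1 h2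
  rw [update_eq] at h2
  rw [h1]
  have : x - (ContinuousLinearMap.proj j : (Fin n → ℝ) →L[ℝ] ℝ) x • Pi.single j 1 = x + (0 - x j) • (Pi.single j 1 : Fin n → ℝ) := by
    simp [sub_eq_add_neg]
  rw [this, h2]; simp

lemma factor_aux (hM : Wt M) (k : ℕ) : ∀ {f g u : (Fin n → ℝ) → ℝ} {β : Fin n → ℕ}, QA M f 0 → QA M g 0 → QA M u 0 → u 0 ≠ 0 →
    ∑ i, β i = k → ((fun x => f x * g x) =ᶠ[𝓝 0] fun x => mono β x * u x) → Mon M f ∧ Mon M g := by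
  induction k with
  | zero =>
    intro f g u β hf hg hu hu0 hβ h
    have hβ0 : β = 0 := by
      funext i
      have := Finset.sum_eq_zero_iff.1 hβ i (Finset.mem_univ i)
      simpa using this
    have h0 := h.self_of_nhds
    subst hβ0
    simp only [mono_zero, one_mul] at h0
    rw [← h0] at hu0
    exact ⟨Mon.unit hf (left_ne_zero_of_mul hu0), Mon.unit hg (right_ne_zero_of_mul hu0)⟩
  | succ k ih =>
    intro f g u β hf hg hu hu0 hβ h
    obtain ⟨j, hj⟩ : ∃ j, β j ≠ 0 := by
      by_contra hcon; push Not at hcon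
      simp [hcon] at hβ
    set β' : Fin n → ℕ := β - Pi.single j 1 with hβ'
    have hββ : β = β' + Pi.single j 1 := by
      funext i
      by_cases hi : i = j
      · subst hi; simp [hβ']; omega
      · simp [hβ', hi]
    have hsum : ∑ i, β' i = k := by
      rw [hββ] at hβ
      simp [Finset.sum_add_distrib] at hβ
      exact hβ
    -- main step with symmetric roles
    have step : ∀ {f g : (Fin n → ℝ) → ℝ}, QA M f 0 → QA M g 0 → ((fun x => f x * g x) =ᶠ[𝓝 0] fun x => mono β x * u x) →
        (∀ᶠ x in 𝓝 0, f (Function.update x j 0) = 0) → Mon M f ∧ Mon M g := by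
      intro f g hf hg h h0
      obtain ⟨G, hG, hfG⟩ := hadamard_coord hM hf j h0
      have h1 : ∀ᶠ x : Fin n → ℝ in 𝓝 0, x j * (G x * g x - mono β' x * u x) = 0 := by
        filter_upwards [h, hfG] with x a b
        rw [b, hββ, mono_add, mono_single] at a
        linear_combination a
      rcases QA.mul_eq_zero hM (QA.coord hM j 0) ((hG.mul hM hg).sub hM ((QA.mono hM β' 0).mul hM hu)) h1 with h2 | h2
      · exact absurd h2 (Mon.coord hM j).ne_zero
      · obtain ⟨a, b⟩ := ih hG hg hu hu0 hsum (by
          filter_upwards [h2] with x hx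
          simp only [Pi.zero_apply] at hx
          linarith)
        exact ⟨((Mon.coord hM j).mul hM a).congr hfG, b⟩
    have hr : Tendsto (fun x : Fin n → ℝ => Function.update x j 0) (𝓝 0) (𝓝 0) := by
      have : Continuous (fun x : Fin n → ℝ => Function.update x j 0) := by fun_prop
      have h2 := this.tendsto 0
      have h3 : Function.update (0 : Fin n → ℝ) j 0 = 0 := by simp
      rwa [h3] at h2
    have hrQ : QA M (fun x : Fin n → ℝ => Function.update x j 0) 0 := (QA.id hM 0).update hM (QA.const hM 0 0) j
    have h3 : Function.update (0 : Fin n → ℝ) j 0 = 0 := by simp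
    have hfr : QA M (fun x : Fin n → ℝ => f (Function.update x j 0)) 0 := QA.comp hM (f := fun x : Fin n → ℝ => Function.update x j 0) (by rw [h3]; exact hf) hrQ
    have hgr : QA M (fun x : Fin n → ℝ => g (Function.update x j 0)) 0 := QA.comp hM (f := fun x : Fin n → ℝ => Function.update x j 0) (by rw [h3]; exact hg) hrQ
    have hz : ∀ᶠ x in 𝓝 0, f (Function.update x j 0) * g (Function.update x j 0) = 0 := by
      filter_upwards [hr.eventually h] with x hx
      rw [hx, mono_eq_zero hj (by simp), zero_mul]
    rcases QA.mul_eq_zero hM hfr hgr hz with h4 | h4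
    · exact step hf hg h h4
    · exact (step hg hf (by simpa only [mul_comm (g _)] using h) h4).symm

lemma Mon.factor (hM : Wt M) {f g : (Fin n → ℝ) → ℝ} (hf : QA M f 0) (hg : QA M g 0) (h : Mon M (fun x => f x * g x)) :
    Mon M f ∧ Mon M g := by
  obtain ⟨β, u, h1, h2, h3⟩ := h
  exact factor_aux hM _ hf hg h1 h2 rfl h3

lemma Mon.factor_prod (hM : Wt M) {ι : Type} (s : Finset ι) {F : ι → (Fin n → ℝ) → ℝ} (hF : ∀ i ∈ s, QA M (F i) 0)
    (h : Mon M (fun x => ∏ i ∈ s, F i x)) : ∀ i ∈ s, Mon M (F i) := by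
  classical
  intro i hi
  have : (fun x => ∏ i ∈ s, F i x) = fun x => F i x * ∏ k ∈ s.erase i, F k x := by
    funext x; rw [Finset.mul_prod_erase s (fun k => F k x) hi]
  rw [this] at h
  exact (Mon.factor hM (hF i hi) (QA.prod hM _ fun k hk => hF k (Finset.mem_of_mem_erase hk)) h).1

/-- comparison of exponents -/
lemma exponent_le {α β : Fin n → ℕ} {u v : (Fin n → ℝ) → ℝ} (hu : QA M u 0) (hv : QA M v 0) (hv0 : 0 < v 0)
    (h : ∀ᶠ x in 𝓝 0, (∀ j, 0 < x j) → mono β x * v x ≤ mono α x * u x) : α ≤ β := by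
  intro j
  by_contra hcon
  have hlt : β j < α j := Nat.lt_of_not_le hcon
  have hb : ∀ᶠ x in 𝓝 0, u x < |u 0| + 1 := hu.continuousAt.eventually_lt_const (by linarith [le_abs_self (u 0)])
  have hv' : ∀ᶠ x in 𝓝 0, v 0 / 2 < v x := hv.continuousAt.eventually_const_lt (by linarith)
  obtain ⟨δ, hδ, hx⟩ := exists_pos ((h.and hb).and hv')
  set K := |u 0| + 1
  have hK : 0 < K := by positivity
  have hm : ∀ (γ : Fin n → ℕ) (s : ℝ), mono γ (Function.update (fun _ => δ) j s) = s ^ γ j * ∏ i ∈ Finset.univ.erase j, δ ^ γ i := by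
    intro γ s
    unfold mono
    rw [← Finset.mul_prod_erase Finset.univ _ (Finset.mem_univ j)]
    congr 1
    · simp
    · exact Finset.prod_congr rfl fun i hi => by simp [Finset.ne_of_mem_erase hi]
  set P : (Fin n → ℕ) → ℝ := fun γ => ∏ i ∈ Finset.univ.erase j, δ ^ γ i with hP
  have hPp : ∀ γ, 0 < P γ := fun γ => Finset.prod_pos fun i _ => by positivity
  have key : ∀ s ∈ Ioc 0 δ, P β * (v 0 / 2) ≤ s ^ (α j - β j) * (P α * K) := by
    intro s hs
    obtain ⟨⟨a, b⟩, c⟩ := hx (Function.update (fun _ => δ) j s) (by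
      intro i
      by_cases hi : i = j
      · subst hi; simp [abs_of_pos hs.1, hs.2]
      · simp [hi, abs_of_pos hδ])
    have d := a (by
      intro i
      by_cases hi : i = j
      · subst hi; simp [hs.1]
      · simp [hi, hδ])
    rw [hm, hm] at d
    have hsβ : 0 < s ^ β j := pow_pos hs.1 _
    have hsα : 0 < s ^ α j := pow_pos hs.1 _
    have e : s ^ α j = s ^ β j * s ^ (α j - β j) := by rw [← pow_add]; congr 1; omega
    have f : s ^ β j * (P β * (v 0 / 2)) ≤ s ^ β j * (s ^ (α j - β j) * (P α * K)) := by
      calc s ^ β j * (P β * (v 0 / 2)) = (s ^ β j * P β) * (v 0 / 2) := by ring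
        _ ≤ (s ^ β j * P β) * v (Function.update (fun _ => δ) j s) := by
          have := hPp β
          gcongr
        _ ≤ s ^ α j * P α * u (Function.update (fun _ => δ) j s) := d
        _ ≤ s ^ α j * P α * K := by
          have := hPp α
          gcongr
        _ = _ := by rw [e]; ring
    exact le_of_mul_le_mul_left f hsβ
  have hlim : Tendsto (fun s : ℝ => s ^ (α j - β j) * (P α * K)) (𝓝[>] 0) (𝓝 (0 ^ (α j - β j) * (P α * K))) := by
    refine Tendsto.mono_left ?_ nhdsWithin_le_nhds
    exact (Continuous.tendsto (by fun_prop) 0)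
  rw [zero_pow (by omega), zero_mul] at hlim
  have : P β * (v 0 / 2) ≤ 0 := ge_of_tendsto hlim (by
    filter_upwards [Ioc_mem_nhdsGT hδ] with s hs using key s hs)
  have := hPp β
  nlinarith

end Loj


namespace Loj
open Set Filter Topology Metric
open scoped ContDiff Nat

variable {M : ℕ → ℝ} {n : ℕ} {U : Ultrafilter ℕ}

/-- lifting of a sequence along a map -/
structure Ref (M : ℕ → ℝ) (U : Ultrafilter ℕ) (y z : ℕ → Fin n → ℝ) (p : (Fin n → ℝ) → (Fin n → ℝ)) : Prop where
  qa : QA M p 0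
  z0 : p 0 = 0
  lim : Tendsto z U (𝓝 0)
  eq : ∀ᶠ m in (U : Filter ℕ), p (z m) = y m

lemma Ref.tendsto {y z : ℕ → Fin n → ℝ} {p : (Fin n → ℝ) → (Fin n → ℝ)} (h : Ref M U y z p) : Tendsto p (𝓝 0) (𝓝 0) := by
  have := h.qa.continuousAt
  unfold ContinuousAt at this
  rwa [h.z0] at this

lemma Ref.comp_qa (hM : Wt M) {y z : ℕ → Fin n → ℝ} {p : (Fin n → ℝ) → (Fin n → ℝ)} (h : Ref M U y z p)
    {F : (Fin n → ℝ) → ℝ} (hF : QA M F 0) : QA M (fun x => F (p x)) 0 :=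
  QA.comp hM (g := F) (f := p) (by rw [h.z0]; exact hF) h.qa

lemma Ref.trans (hM : Wt M) {y z w : ℕ → Fin n → ℝ} {p s : (Fin n → ℝ) → (Fin n → ℝ)} (h : Ref M U y z p) (h' : Ref M U z w s) :
    Ref M U y w (fun x => p (s x)) := by
  refine ⟨QA.comp hM (g := p) (f := s) (by rw [h'.z0]; exact h.qa) h'.qa, by rw [h'.z0, h.z0], h'.lim, ?_⟩
  filter_upwards [h.eq, h'.eq] with m a b
  rw [b, a]

lemma Ref.refl (hM : Wt M) {y : ℕ → Fin n → ℝ} (hy : Tendsto y U (𝓝 0)) : Ref M U y y (fun x => x) :=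
  ⟨QA.id hM 0, rfl, hy, Eventually.of_forall fun _ => rfl⟩

/-- can be monomialized along the sequence -/
def Good (M : ℕ → ℝ) (U : Ultrafilter ℕ) (y : ℕ → Fin n → ℝ) (F : (Fin n → ℝ) → ℝ) : Prop :=
  ∃ z p, Ref M U y z p ∧ Mon M (fun x => F (p x))

lemma Good.of_ref (hM : Wt M) {y z : ℕ → Fin n → ℝ} {p : (Fin n → ℝ) → (Fin n → ℝ)} (h : Ref M U y z p)
    {F : (Fin n → ℝ) → ℝ} (hF : Good M U z (fun x => F (p x))) : Good M U y F := by
  obtain ⟨w, s, h1, h2⟩ := hF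
  exact ⟨w, _, h.trans hM h1, h2⟩

lemma Good.congr {y : ℕ → Fin n → ℝ} {F G : (Fin n → ℝ) → ℝ} (hF : Good M U y F) (h : G =ᶠ[𝓝 0] F) : Good M U y G := by
  obtain ⟨w, s, h1, h2⟩ := hF
  refine ⟨w, s, h1, h2.congr ?_⟩
  filter_upwards [h1.tendsto.eventually h] with x hx using hx

lemma Good.of_mon (hM : Wt M) {y : ℕ → Fin n → ℝ} (hy : Tendsto y U (𝓝 0)) {F : (Fin n → ℝ) → ℝ} (hF : Mon M F) : Good M U y F :=
  ⟨y, _, Ref.refl hM hy, hF⟩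

lemma exists_lim {a : ℕ → ℝ} {L : ℝ} (h : ∀ᶠ m in (U : Filter ℕ), |a m| ≤ L) : ∃ c, Tendsto a U (𝓝 c) := by
  obtain ⟨c, -, hc⟩ := (isCompact_Icc (a := -L) (b := L)).ultrafilter_le_nhds (U.map a) (by
    rw [le_principal_iff]
    show a ⁻¹' Icc (-L) L ∈ (U : Filter ℕ)
    filter_upwards [h] with m hm using abs_le.1 hm)
  exact ⟨c, hc⟩

lemma mono_update {β : Fin n → ℕ} {k : Fin n} (hk : β k = 0) (x : Fin n → ℝ) (s : ℝ) : mono β (Function.update x k s) = mono β x := by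
  unfold mono
  refine Finset.prod_congr rfl fun i _ => ?_
  by_cases h : i = k
  · subst h; simp [hk]
  · simp [h]

lemma Ref.subst (hM : Wt M) {y : ℕ → Fin n → ℝ} (hy : Tendsto y U (𝓝 0)) (j : Fin n) {q : (Fin n → ℝ) → ℝ} (hq : QA M q 0)
    (hqi : ∀ x s, q (Function.update x j s) = q x) {c : ℝ} (hc0 : q 0 * c = 0)
    (hc : Tendsto (fun m => y m j / q (y m)) U (𝓝 c)) (h0 : ∀ᶠ m in (U : Filter ℕ), q (y m) = 0 → y m j = 0) :
    Ref M U y (fun m => Function.update (y m) j (y m j / q (y m) - c)) (fun x => Function.update x j (q x * (c + x j))) := by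
  refine ⟨(QA.id hM 0).update hM (hq.mul hM ((QA.const hM c 0).add hM (QA.coord hM j 0))) j, ?_, ?_, ?_⟩
  · simp [hc0]
  · rw [tendsto_pi_nhds] at hy ⊢
    intro i
    by_cases h : i = j
    · subst h
      simpa using hc.sub_const c
    · simpa [h] using hy i
  · filter_upwards [h0] with m hm
    simp only [hqi, Function.update_self, Function.update_idem]
    rw [Function.update_eq_self_iff]
    by_cases h : q (y m) = 0
    · simp [h, hm h]
    · field_simp; ring

lemma toric (hM : Wt M) (k : Fin n) (s : ℕ) : ∀ {β : Fin n → ℕ} {y : ℕ → Fin n → ℝ}, ∑ i, β i = s → β k = 0 →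
    Tendsto y U (𝓝 0) → (∀ᶠ m in (U : Filter ℕ), y m k ≠ 0) →
    (∀ ε > 0, ∀ᶠ m in (U : Filter ℕ), |mono β (y m)| ≤ ε * |y m k|) →
    ∃ z p, Ref M U y z p ∧ (∀ j, Mon M (fun x => p x j)) ∧
      ∃ ρ, QA M ρ 0 ∧ ρ 0 = 0 ∧ (fun x => mono β (p x)) =ᶠ[𝓝 0] fun x => p x k * ρ x := by
  induction s with
  | zero =>
    intro β y hβ hk hy hyk hsmall
    exfalso
    have hβ0 : β = 0 := by
      funext i
      have := Finset.sum_eq_zero_iff.1 hβ i (Finset.mem_univ i)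
      simpa using this
    have h1 : Tendsto (fun m => |y m k|) U (𝓝 0) := by
      have := ((tendsto_pi_nhds.1 hy) k).abs
      simpa using this
    obtain ⟨m, a, b⟩ := ((hsmall 1 one_pos).and (h1.eventually_lt_const one_pos)).exists
    rw [hβ0, mono_zero, abs_one, one_mul] at a
    linarith
  | succ s ih =>
    intro β y hβ hk hy hyk hsmall
    obtain ⟨j, hj⟩ : ∃ j, β j ≠ 0 := by
      by_contra hcon; push Not at hcon
      simp [hcon] at hβ
    have hjk : j ≠ k := by rintro rfl; exact hj hk
    set β' : Fin n → ℕ := β - Pi.single j 1 with hβ'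
    have hββ : β = β' + Pi.single j 1 := by
      funext i
      by_cases hi : i = j
      · subst hi; simp [hβ']; omega
      · simp [hβ', hi]
    have hsum : ∑ i, β' i = s := by
      rw [hββ] at hβ
      simp [Finset.sum_add_distrib] at hβ
      exact hβ
    have hk' : β' k = 0 := by simp [hβ', hk]
    have hmul : ∀ x, mono β x = mono β' x * x j := by intro x; rw [hββ, mono_add, mono_single]
    by_cases hL : ∃ L, ∀ᶠ m in (U : Filter ℕ), |y m j| ≤ L * |y m k|
    · obtain ⟨L, hL⟩ := hL
      obtain ⟨c, hc⟩ := exists_lim (U := U) (a := fun m => y m j / y m k) (L := L) (by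
        filter_upwards [hL, hyk] with m a b
        rw [abs_div, div_le_iff₀ (abs_pos.2 b)]; exact a)
      have href := Ref.subst hM hy j (q := fun x => x k) (QA.coord hM k 0) (by intro x s; simp [hjk.symm]) (c := c) (by simp) hc
        (by filter_upwards [hyk] with m a b using absurd b a)
      set z := fun m => Function.update (y m) j (y m j / y m k - c) with hz
      set p : (Fin n → ℝ) → (Fin n → ℝ) := fun x => Function.update x j (x k * (c + x j)) with hp
      have hcM : Mon M (fun x : Fin n → ℝ => c + x j) := by
        by_cases h : c = 0
        · subst h; simpa using Mon.coord hM j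
        · exact Mon.unit ((QA.const hM c 0).add hM (QA.coord hM j 0)) (by simpa using h)
      set ρ : (Fin n → ℝ) → ℝ := fun x => mono β' (p x) * (c + x j) with hρ
      have hρQ : QA M ρ 0 := (href.comp_qa hM (QA.mono hM β' 0)).mul hM ((QA.const hM c 0).add hM (QA.coord hM j 0))
      have heq : ∀ x, mono β (p x) = p x k * ρ x := by
        intro x
        rw [hmul]
        have h1 : p x j = x k * (c + x j) := by simp [hp]
        have h2 : p x k = x k := by simp [hp, hjk.symm]
        rw [h1, h2]; simp only [hρ]; ring
      refine ⟨z, p, href, ?_, ρ, hρQ, ?_, Eventually.of_forall heq⟩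
      · intro i
        by_cases hi : i = j
        · subst hi
          simpa [hp] using (Mon.coord hM k).mul hM hcM
        · simpa [hp, hi] using Mon.coord hM i
      · have h1 : Tendsto (fun m => ρ (z m)) U (𝓝 (ρ 0)) := Tendsto.comp hρQ.continuousAt href.lim
        have h2 : Tendsto (fun m => ρ (z m)) U (𝓝 0) := by
          rw [Metric.tendsto_nhds]
          intro ε hε
          filter_upwards [hsmall (ε/2) (by positivity), href.eq, hyk] with m a b d
          have h3 := heq (z m)
          rw [b] at h3
          rw [h3, abs_mul, mul_comm] at a
          have h4 := le_of_mul_le_mul_right a (abs_pos.2 d)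
          rw [Real.dist_eq, sub_zero]; linarith
        exact tendsto_nhds_unique h1 h2
    · have hL' : ∀ L, ∀ᶠ m in (U : Filter ℕ), L * |y m k| < |y m j| := by
        intro L
        by_contra hcon
        rw [← Ultrafilter.eventually_not] at hcon
        exact hL ⟨L, by filter_upwards [hcon] with m hm using not_lt.1 hm⟩
      have hyj : ∀ᶠ m in (U : Filter ℕ), y m j ≠ 0 := by
        filter_upwards [hL' 0] with m hm
        rw [zero_mul] at hm
        exact abs_pos.1 hm
      have hc : Tendsto (fun m => y m k / y m j) U (𝓝 0) := by
        rw [Metric.tendsto_nhds]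
        intro ε hε
        filter_upwards [hL' (1/ε), hyj] with m a b
        rw [Real.dist_eq, sub_zero, abs_div, div_lt_iff₀ (abs_pos.2 b)]
        rw [one_div, inv_mul_lt_iff₀ hε] at a
        exact a
      have href := Ref.subst hM hy k (q := fun x => x j) (QA.coord hM j 0) (by intro x s; simp [hjk]) (c := 0) (by simp) hc
        (by filter_upwards [hyj] with m a b using absurd b a)
      simp only [sub_zero, zero_add] at href
      set z := fun m => Function.update (y m) k (y m k / y m j) with hz
      set p : (Fin n → ℝ) → (Fin n → ℝ) := fun x => Function.update x k (x j * x k) with hp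
      obtain ⟨w, p', href', hmon, ρ, hρ, hρ0, heq⟩ := ih (y := z) hsum hk' href.lim (by
          filter_upwards [hyk, hyj] with m a b
          simp [hz, a, b]) (by
          intro ε hε
          filter_upwards [hsmall ε hε, hyj] with m a b
          simp only [hz, mono_update hk', Function.update_self]
          rw [abs_div, ← mul_div_assoc, le_div_iff₀ (abs_pos.2 b), ← abs_mul, ← hmul]
          exact a)
      refine ⟨w, _, href.trans hM href', ?_, ρ, hρ, hρ0, ?_⟩
      · intro i
        by_cases hi : i = k
        · subst hi
          simpa [hp] using (hmon j).mul hM (hmon i)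
        · simpa [hp, hi] using hmon i
      · filter_upwards [heq] with x hx
        have h1 : mono β (p (p' x)) = mono β (p' x) := mono_update hk _ _
        have h2 : p (p' x) k = p' x j * p' x k := by simp [hp]
        rw [h1, h2, hmul, hx]; ring

/-- ramification -/
lemma ramify (hM : Wt M) {y : ℕ → Fin n → ℝ} (hy : Tendsto y U (𝓝 0)) {e : ℕ} (he : e ≠ 0) :
    ∃ (ε : Fin n → ℝ) (z : ℕ → Fin n → ℝ), (∀ j, ε j ≠ 0) ∧ Ref M U y z (fun x j => ε j * x j ^ e) := by
  have h1 : ∀ j, ∃ ε : ℝ, ε ≠ 0 ∧ ∀ᶠ m in (U : Filter ℕ), y m j = ε * |y m j| := by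
    intro j
    have : ∀ᶠ m in (U : Filter ℕ), 0 ≤ y m j ∨ y m j ≤ 0 := Eventually.of_forall fun m => le_total _ _
    rcases Ultrafilter.eventually_or.1 this with h | h
    · exact ⟨1, by simp, by filter_upwards [h] with m hm; rw [abs_of_nonneg hm, one_mul]⟩
    · exact ⟨-1, by simp, by filter_upwards [h] with m hm; rw [abs_of_nonpos hm]; ring⟩
  choose ε hε0 hε using h1
  have he' : (0:ℝ) < 1 / e := by positivity
  refine ⟨ε, fun m j => |y m j| ^ ((1:ℝ)/e), hε0, QA.pi hM fun j => (QA.const hM _ 0).mul hM ((QA.coord hM j 0).pow hM e), ?_, ?_, ?_⟩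
  · funext j; simp [he]
  · rw [tendsto_pi_nhds] at hy ⊢
    intro j
    have h2 := ((hy j).abs).rpow_const (p := (1:ℝ)/e) (Or.inr he'.le)
    have h3 : |(0 : Fin n → ℝ) j| ^ ((1:ℝ)/e) = 0 := by simp [he]
    rw [h3] at h2
    exact h2
  · filter_upwards [Filter.eventually_all.2 hε] with m hm
    funext j
    rw [← Real.rpow_natCast, ← Real.rpow_mul (abs_nonneg _), one_div, inv_mul_cancel₀ (by exact_mod_cast he), Real.rpow_one]
    exact (hm j).symm

lemma mono_ramify (β : Fin n → ℕ) (ε x : Fin n → ℝ) (e : ℕ) : mono β (fun j => ε j * x j ^ e) = mono β ε * mono (e • β) x := by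
  simp [mono, mul_pow, Finset.prod_mul_distrib, ← pow_mul]

end Loj


namespace Loj
open Set Filter Topology Metric
open scoped ContDiff Nat

variable {M : ℕ → ℝ} {n : ℕ} {U : Ultrafilter ℕ}

/-- the uniformization statement in dimension `n` -/
def PP (M : ℕ → ℝ) (n : ℕ) : Prop := ∀ (U : Ultrafilter ℕ) (y : ℕ → Fin n → ℝ), Tendsto y U (𝓝 0) →
  ∀ F : (Fin n → ℝ) → ℝ, QA M F 0 → ¬ F =ᶠ[𝓝 0] 0 → Good M U y F

lemma prod_ne_zero' (hM : Wt M) {ι : Type} (s : Finset ι) {F : ι → (Fin n → ℝ) → ℝ} (hF : ∀ i ∈ s, QA M (F i) 0)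
    (h0 : ∀ i ∈ s, ¬ F i =ᶠ[𝓝 0] 0) : ¬ (fun x => ∏ i ∈ s, F i x) =ᶠ[𝓝 0] 0 := by
  classical
  induction s using Finset.induction_on with
  | empty =>
    intro h
    have := h.eq_of_nhds
    simp at this
  | insert i s hi ih =>
    intro h
    simp only [Finset.prod_insert hi] at h
    rcases QA.mul_eq_zero hM (hF i (Finset.mem_insert_self i s))
      (QA.prod hM s fun j hj => hF j (Finset.mem_insert_of_mem hj)) h with h | h
    · exact h0 i (Finset.mem_insert_self i s) h
    · exact ih (fun j hj => hF j (Finset.mem_insert_of_mem hj)) (fun j hj => h0 j (Finset.mem_insert_of_mem hj)) h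

lemma PP.finset (hM : Wt M) (hP : PP M n) {y : ℕ → Fin n → ℝ} (hy : Tendsto y U (𝓝 0)) {S : Set ((Fin n → ℝ) → ℝ)}
    (hS : S.Finite) (hF : ∀ F ∈ S, QA M F 0) :
    ∃ z p, Ref M U y z p ∧ ∀ F ∈ S, ¬ F =ᶠ[𝓝 0] 0 → Mon M (fun x => F (p x)) := by
  classical
  set s := hS.toFinset.filter (fun F => ¬ F =ᶠ[𝓝 0] 0) with hs
  have hmem : ∀ F, F ∈ s ↔ F ∈ S ∧ ¬ F =ᶠ[𝓝 0] 0 := by intro F; simp [hs]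
  obtain ⟨z, p, h1, h2⟩ := hP U y hy (fun x => ∏ F ∈ s, F x)
    (QA.prod hM s (f := fun F => F) fun F hFs => hF F ((hmem F).1 hFs).1)
    (prod_ne_zero' hM s (F := fun F => F) (fun F hFs => hF F ((hmem F).1 hFs).1) (fun F hFs => ((hmem F).1 hFs).2))
  refine ⟨z, p, h1, fun F hFS hF0 => ?_⟩
  exact Mon.factor_prod hM s (F := fun F x => F (p x)) (fun F hFs => h1.comp_qa hM (hF F ((hmem F).1 hFs).1)) h2 F
    ((hmem F).2 ⟨hFS, hF0⟩)

lemma mm_eq {d i : ℕ} (h : i < d) : (2 * (d ! / (d - i))) * (d - i) = 2 * d ! := by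
  have : (d - i) ∣ d ! := Nat.dvd_factorial (by omega) (by omega)
  rw [mul_assoc, Nat.div_mul_cancel this]

lemma lemmaS (hM : Wt M) (hP : PP M n) {y : ℕ → Fin n → ℝ} (hy : Tendsto y U (𝓝 0)) {h : (Fin n → ℝ) → ℝ}
    (hh : QA M h 0) (hh0 : ¬ h =ᶠ[𝓝 0] 0) {d : ℕ} {a : ℕ → (Fin n → ℝ) → ℝ} (ha : ∀ i, QA M (a i) 0)
    (ha0 : ∀ i < d, a i 0 = 0) (hne : ∃ i < d, ¬ a i =ᶠ[𝓝 0] 0) :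
    ∃ z p, Ref M U y z p ∧ Mon M (fun x => h (p x)) ∧ ∃ (β : Fin n → ℕ) (c : ℕ → (Fin n → ℝ) → ℝ),
      β ≠ 0 ∧ (∀ i < d, QA M (c i) 0) ∧ (∃ i < d, c i 0 ≠ 0) ∧
      (∀ i < d, (fun x => a i (p x)) =ᶠ[𝓝 0] fun x => mono ((d - i) • β) x * c i x) ∧
      (∀ i < d, a i =ᶠ[𝓝 0] 0 → ∀ x, c i x = 0) := by
  classical
  set m : ℕ → ℕ := fun i => 2 * (d ! / (d - i)) with hm
  have hmm : ∀ i < d, m i * (d - i) = 2 * d ! := fun i hi => mm_eq hi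
  set b : ℕ → (Fin n → ℝ) → ℝ := fun i x => a i x ^ m i with hb
  have hbQ : ∀ i, QA M (b i) 0 := fun i => (ha i).pow hM (m i)
  set S : Set ((Fin n → ℝ) → ℝ) := insert h ((a '' (Finset.range d : Set ℕ)) ∪
    ((fun q : ℕ × ℕ => fun x => b q.1 x - b q.2 x) '' ((Finset.range d ×ˢ Finset.range d : Finset (ℕ × ℕ)) : Set (ℕ × ℕ)))) with hS
  have hSf : S.Finite := ((Finset.finite_toSet _).image _ |>.union ((Finset.finite_toSet _).image _)).insert _
  obtain ⟨z, p, hR, hMon⟩ := hP.finset hM hy hSf (by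
    rintro F (rfl | ⟨i, -, rfl⟩ | ⟨q, -, rfl⟩)
    · exact hh
    · exact ha i
    · exact (hbQ _).sub hM (hbQ _))
  have hhM := hMon h (mem_insert _ _) hh0
  set s := (Finset.range d).filter (fun i => ¬ a i =ᶠ[𝓝 0] 0) with hs
  have hmem : ∀ i, i ∈ s ↔ i < d ∧ ¬ a i =ᶠ[𝓝 0] 0 := by intro i; simp [hs]
  have haM : ∀ i, ∃ (γ : Fin n → ℕ) (u : (Fin n → ℝ) → ℝ), i ∈ s → QA M u 0 ∧ u 0 ≠ 0 ∧
      (fun x => a i (p x)) =ᶠ[𝓝 0] fun x => mono γ x * u x := by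
    intro i
    by_cases hi : i ∈ s
    · obtain ⟨γ, u, h1⟩ := hMon (a i) (mem_insert_of_mem _ (Or.inl ⟨i, by simpa using ((hmem i).1 hi).1, rfl⟩)) ((hmem i).1 hi).2
      exact ⟨γ, u, fun _ => h1⟩
    · exact ⟨0, 0, fun h => absurd h hi⟩
  choose γ u hγ using haM
  have hbe : ∀ i ∈ s, (fun x => b i (p x)) =ᶠ[𝓝 0] fun x => mono (m i • γ i) x * u i x ^ m i := by
    intro i hi
    filter_upwards [(hγ i hi).2.2] with x hx
    simp only [hb]
    rw [hx, mul_pow, mono_smul]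
  have huQ : ∀ i ∈ s, QA M (fun x => u i x ^ m i) 0 := fun i hi => (hγ i hi).1.pow hM _
  have hup : ∀ i ∈ s, 0 < u i 0 ^ m i := fun i hi => (even_two_mul _).pow_pos (hγ i hi).2.1
  have key : ∀ i ∈ s, ∀ j ∈ s, (∀ᶠ x in 𝓝 (0 : Fin n → ℝ), (∀ l, 0 < x l) → b j (p x) ≤ b i (p x)) → m i • γ i ≤ m j • γ j := by
    intro i hi j hj hij
    refine exponent_le (huQ i hi) (huQ j hj) (hup j hj) ?_
    filter_upwards [hij, hbe i hi, hbe j hj] with x h1 h2 h3 h4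
    rw [← h2, ← h3]; exact h1 h4
  have htot : ∀ i ∈ s, ∀ j ∈ s, m i • γ i ≤ m j • γ j ∨ m j • γ j ≤ m i • γ i := by
    intro i hi j hj
    by_cases h0 : (fun x => b i x - b j x) =ᶠ[𝓝 0] 0
    · left
      refine key i hi j hj ?_
      filter_upwards [hR.tendsto.eventually h0] with x hx _
      have : b i (p x) - b j (p x) = 0 := hx
      linarith
    · obtain ⟨δ, v, h1, h2, h3⟩ := hMon (fun x => b i x - b j x) (mem_insert_of_mem _ (Or.inr ⟨(i, j), by
        simpa using ⟨((hmem i).1 hi).1, ((hmem j).1 hj).1⟩, rfl⟩)) h0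
      rcases lt_or_gt_of_ne h2 with h2 | h2
      · right
        refine key j hj i hi ?_
        filter_upwards [h3, h1.continuousAt.eventually_lt_const h2] with x hx hv hp
        have h4 : 0 < mono δ x := Finset.prod_pos fun l _ => pow_pos (hp l) _
        have := mul_neg_of_pos_of_neg h4 hv
        linarith
      · left
        refine key i hi j hj ?_
        filter_upwards [h3, h1.continuousAt.eventually_const_lt h2] with x hx hv hp
        have h4 : 0 < mono δ x := Finset.prod_pos fun l _ => pow_pos (hp l) _
        have := mul_pos h4 hv
        linarith
  obtain ⟨i0, hi0, hmin⟩ := Finset.exists_minimalFor (fun i => m i • γ i) s (by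
    obtain ⟨i, hi, h0⟩ := hne
    exact ⟨i, (hmem i).2 ⟨hi, h0⟩⟩)
  have hle : ∀ i ∈ s, m i0 • γ i0 ≤ m i • γ i := by
    intro i hi
    rcases htot i0 hi0 i hi with h | h
    · exact h
    · exact hmin hi h
  have hi0d := ((hmem i0).1 hi0).1
  obtain ⟨ε, w, hε, hR2⟩ := ramify hM hR.lim (e := d - i0) (by omega)
  have hexp : ∀ i ∈ s, (d - i) • γ i0 ≤ (d - i0) • γ i := by
    intro i hi j
    have hid := ((hmem i).1 hi).1
    have h1 := hle i hi j
    simp only [Pi.smul_apply, smul_eq_mul] at h1 ⊢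
    have h2 := hmm i hid
    have h3 := hmm i0 hi0d
    have h4 : (2 * d !) * ((d - i) * γ i0 j) ≤ (2 * d !) * ((d - i0) * γ i j) := by
      calc (2 * d !) * ((d - i) * γ i0 j) = (m i0 * γ i0 j) * ((d - i0) * (d - i)) := by rw [← h3]; ring
        _ ≤ (m i * γ i j) * ((d - i0) * (d - i)) := Nat.mul_le_mul_right _ h1
        _ = (2 * d !) * ((d - i0) * γ i j) := by rw [← h2]; ring
    exact Nat.le_of_mul_le_mul_left h4 (by positivity)
  set p2 : (Fin n → ℝ) → (Fin n → ℝ) := fun x j => ε j * x j ^ (d - i0) with hp2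
  set c : ℕ → (Fin n → ℝ) → ℝ := fun i x => if i ∈ s then
    mono (γ i) ε * mono ((d - i0) • γ i - (d - i) • γ i0) x * u i (p2 x) else 0 with hc
  have hcs : ∀ i ∈ s, c i = fun x => mono (γ i) ε * mono ((d - i0) • γ i - (d - i) • γ i0) x * u i (p2 x) := by
    intro i hi; funext x; simp only [hc, if_pos hi]
  have hcn : ∀ i, i ∉ s → c i = fun x => 0 := by
    intro i hi; funext x; simp only [hc, if_neg hi]
  refine ⟨w, _, hR.trans hM hR2, ?_, γ i0, c, ?_, ?_, ?_, ?_, ?_⟩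
  · obtain ⟨δ, v, h1, h2, h3⟩ := hhM
    refine ⟨(d - i0) • δ, fun x => mono δ ε * v (p2 x), (QA.const hM _ 0).mul hM (hR2.comp_qa hM h1), ?_, ?_⟩
    · exact mul_ne_zero (mono_ne_zero _ hε) (by rw [hR2.z0]; exact h2)
    · filter_upwards [hR2.tendsto.eventually h3] with x hx
      rw [hx, mono_ramify]; ring
  · intro h0
    have h1 := (hγ i0 hi0).2.2.eq_of_nhds
    simp only [h0, mono_zero, hR.z0, ha0 i0 hi0d, one_mul] at h1
    exact (hγ i0 hi0).2.1 h1.symm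
  · intro i hi
    by_cases his : i ∈ s
    · rw [hcs i his]
      exact ((QA.const hM _ 0).mul hM (QA.mono hM _ 0)).mul hM (hR2.comp_qa hM (hγ i his).1)
    · rw [hcn i his]; exact QA.const hM _ 0
  · refine ⟨i0, hi0d, ?_⟩
    rw [hcs i0 hi0]
    simp only [tsub_self, mono_zero, mul_one]
    exact mul_ne_zero (mono_ne_zero _ hε) (by rw [hR2.z0]; exact (hγ i0 hi0).2.1)
  · intro i hi
    by_cases his : i ∈ s
    · rw [hcs i his]
      filter_upwards [hR2.tendsto.eventually (hγ i his).2.2] with x hx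
      have h5 : (d - i0) • γ i = (d - i) • γ i0 + ((d - i0) • γ i - (d - i) • γ i0) := (add_tsub_cancel_of_le (hexp i his)).symm
      rw [hx, mono_ramify]
      conv_lhs => rw [h5, mono_add]
      ring
    · rw [hcn i his]
      have h0 : a i =ᶠ[𝓝 0] 0 := by
        by_contra hcon
        exact his ((hmem i).2 ⟨hi, hcon⟩)
      filter_upwards [(hR.trans hM hR2).tendsto.eventually h0] with x hx
      rw [mul_zero]; exact hx
  · intro i hi h0 x
    rw [hcn i (fun h => ((hmem i).1 h).2 h0)]

end Loj


namespace Loj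
open Set Filter Topology Metric
open scoped ContDiff Nat

lemma poly_dvd (d : ℕ) : ∀ {P : Polynomial ℝ} {w : ℝ → ℝ} {w0 : ℝ}, Tendsto w (𝓝[≠] 0) (𝓝 w0) →
    (∀ᶠ t in 𝓝[≠] (0:ℝ), P.eval t = t ^ d * w t) → (Polynomial.X : Polynomial ℝ) ^ d ∣ P := by
  induction d with
  | zero => intro P w w0 _ _; simp
  | succ d ih =>
    intro P w w0 hw h
    have h1 : Tendsto (fun t => P.eval t) (𝓝[≠] (0:ℝ)) (𝓝 (P.eval 0)) :=
      (P.continuous.tendsto 0).mono_left nhdsWithin_le_nhds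
    have h2 : Tendsto (fun t : ℝ => t ^ (d+1) * w t) (𝓝[≠] (0:ℝ)) (𝓝 (0 ^ (d+1) * w0)) :=
      (((continuous_pow (d+1)).tendsto (0:ℝ)).mono_left nhdsWithin_le_nhds).mul hw
    have h3 : P.eval 0 = 0 := by
      have := tendsto_nhds_unique h1 (h2.congr' (by filter_upwards [h] with t ht using ht.symm))
      simpa using this
    obtain ⟨R, hR⟩ := Polynomial.X_dvd_iff.2 (by rw [Polynomial.coeff_zero_eq_eval_zero]; exact h3 : P.coeff 0 = 0)
    have := ih (P := R) hw (by
      filter_upwards [h, self_mem_nhdsWithin] with t ht ht0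
      have ht0' : t ≠ 0 := ht0
      rw [hR, Polynomial.eval_mul, Polynomial.eval_X, pow_succ'] at ht
      rw [mul_assoc] at ht
      exact mul_left_cancel₀ ht0' ht)
    rw [hR, pow_succ']
    exact mul_dvd_mul_left _ this

lemma poly_contra {a : ℕ → ℝ} {e c : ℝ} {d : ℕ} {w : ℝ → ℝ} (he : e ≠ 0) (hd : 1 ≤ d) (ha : a (d - 1) = 0)
    (hw : ContinuousAt w 0)
    (h : ∀ᶠ t in 𝓝 (0:ℝ), ∑ i ∈ Finset.range d, a i * (c + t) ^ i + (c + t) ^ d * e = t ^ d * w t) :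
    ∀ i < d, a i = 0 := by
  open Polynomial in
  set Q : Polynomial ℝ := ∑ i ∈ Finset.range d, C (a i) * X ^ i + C e * X ^ d with hQ
  have hcoeff : ∀ i < d, Q.coeff i = a i := by
    intro i hi
    simp [hQ, Polynomial.coeff_C_mul, Polynomial.coeff_X_pow, hi, hi.ne]
  have hcd : Q.coeff d = e := by
    simp [hQ, Polynomial.coeff_C_mul, Polynomial.coeff_X_pow]
  have hdeg : Q.natDegree ≤ d := by
    rw [Polynomial.natDegree_le_iff_coeff_eq_zero]
    intro i hi
    have h1 : ¬ i < d := by omega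
    simp [hQ, Polynomial.coeff_C_mul, Polynomial.coeff_X_pow, h1, hi.ne']
  obtain ⟨R, hR⟩ := poly_dvd d (P := Q.comp (X + C c)) (w := w) (w0 := w 0) (hw.tendsto.mono_left nhdsWithin_le_nhds) (by
    filter_upwards [nhdsWithin_le_nhds h] with t ht
    rw [← ht]
    simp [hQ, Polynomial.eval_finsetSum, add_comm t c, mul_comm e])
  have h2 : Q = (X - C c) ^ d * R.comp (X - C c) := by
    have := congrArg (fun P => Polynomial.comp P (X - C c)) hR
    simp [Polynomial.comp_assoc] at this
    exact this
  have hQ0 : Q ≠ 0 := by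
    intro h0; rw [h0] at hcd; simp at hcd; exact he hcd.symm
  set R' := R.comp (X - C c) with hR'
  have hR0 : R' ≠ 0 := by rintro h0; rw [h0, mul_zero] at h2; exact hQ0 h2
  have h3 : R'.natDegree = 0 := by
    have h4 := congrArg Polynomial.natDegree h2
    rw [Polynomial.natDegree_mul (pow_ne_zero _ (Polynomial.X_sub_C_ne_zero c)) hR0, Polynomial.natDegree_pow,
      Polynomial.natDegree_X_sub_C] at h4
    omega
  rw [Polynomial.eq_C_of_natDegree_eq_zero h3] at h2
  set r := R'.coeff 0
  have h5 : ∀ i, Q.coeff i = (-c) ^ (d - i) * (d.choose i) * r := by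
    intro i
    rw [h2, Polynomial.coeff_mul_C, sub_eq_add_neg, ← Polynomial.C_neg, Polynomial.coeff_X_add_C_pow]
  have hr : r = e := by
    have := h5 d
    rw [hcd] at this; simpa using this.symm
  have hc : c = 0 := by
    have h6 := h5 (d - 1)
    rw [hcoeff _ (by omega), ha, hr] at h6
    have h7 : d - (d - 1) = 1 := by omega
    have h8 : (d.choose (d-1) : ℝ) ≠ 0 := by
      have := Nat.choose_pos (show d - 1 ≤ d by omega)
      exact_mod_cast this.ne'
    rw [h7, pow_one] at h6
    have := h6.symm
    simp [he, h8] at this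
    exact this
  intro i hi
  rw [← hcoeff i hi, h5, hc]
  have : d - i ≠ 0 := by omega
  simp [this]

end Loj


namespace Loj
open Set Filter Topology Metric
open scoped ContDiff Nat

variable {M : ℕ → ℝ} {n : ℕ} {U : Ultrafilter ℕ}

/-- drop the first coordinate -/
def tl (x : Fin (n+1) → ℝ) : Fin n → ℝ := fun i => x i.succ

/-- add a first coordinate -/
def cn (t : ℝ) (v : Fin n → ℝ) : Fin (n+1) → ℝ := Fin.cons t v

@[simp] lemma cn_zero (t : ℝ) (v : Fin n → ℝ) : cn t v 0 = t := rfl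
@[simp] lemma cn_succ (t : ℝ) (v : Fin n → ℝ) (i : Fin n) : cn t v i.succ = v i := rfl
@[simp] lemma tl_cn (t : ℝ) (v : Fin n → ℝ) : tl (cn t v) = v := rfl
@[simp] lemma tl_zero : tl (0 : Fin (n+1) → ℝ) = 0 := rfl

lemma cn_tl (x : Fin (n+1) → ℝ) : cn (x 0) (tl x) = x := by
  funext i; refine Fin.cases ?_ (fun i => ?_) i <;> rfl

lemma cn_ext {x y : Fin (n+1) → ℝ} (h0 : x 0 = y 0) (h : tl x = tl y) : x = y := by
  rw [← cn_tl x, ← cn_tl y, h0, h]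

lemma cn_00 : cn 0 (0 : Fin n → ℝ) = 0 := cn_ext rfl rfl

/-- first basis vector -/
def e0 : Fin (n+1) → ℝ := cn 1 0

/-- first coordinate -/
noncomputable def l0 : (Fin (n+1) → ℝ) →L[ℝ] ℝ := ContinuousLinearMap.proj 0

@[simp] lemma l0_apply (x : Fin (n+1) → ℝ) : l0 x = x 0 := rfl

lemma l0_e0 : l0 (e0 : Fin (n+1) → ℝ) = 1 := rfl

/-- embedding as a coordinate hyperplane -/
noncomputable def emb : (Fin n → ℝ) →L[ℝ] (Fin (n+1) → ℝ) :=
  ContinuousLinearMap.pi (Fin.cons 0 (fun i => ContinuousLinearMap.proj i) : Fin (n+1) → ((Fin n → ℝ) →L[ℝ] ℝ))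

lemma emb_apply (v : Fin n → ℝ) : emb v = cn 0 v := by
  funext i; refine Fin.cases ?_ (fun i => ?_) i <;> simp [emb]

@[simp] lemma tl_add_smul (x : Fin (n+1) → ℝ) (s : ℝ) : tl (x + s • e0) = tl x := by
  funext i; simp [tl, e0]

@[simp] lemma add_smul_zero' (x : Fin (n+1) → ℝ) (s : ℝ) : (x + s • (e0 : Fin (n+1) → ℝ)) 0 = x 0 + s := by
  simp [e0]

lemma rr_eq (x : Fin (n+1) → ℝ) : rr l0 e0 x = emb (tl x) := by
  rw [emb_apply]
  refine cn_ext ?_ ?_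
  · simp [rr, e0]
  · funext i; simp [rr, e0, tl]

lemma QA.tl (hM : Wt M) (x : Fin (n+1) → ℝ) : QA M (tl : (Fin (n+1) → ℝ) → Fin n → ℝ) x :=
  QA.pi hM fun i => QA.coord hM i.succ x

lemma tl_tendsto : Tendsto (tl : (Fin (n+1) → ℝ) → Fin n → ℝ) (𝓝 0) (𝓝 0) := by
  have : Continuous (tl : (Fin (n+1) → ℝ) → Fin n → ℝ) := by unfold tl; fun_prop
  exact this.tendsto 0

lemma QA.comp_tl (hM : Wt M) {h : (Fin n → ℝ) → ℝ} (hh : QA M h 0) : QA M (fun x : Fin (n+1) → ℝ => h (Loj.tl x)) 0 :=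
  QA.comp hM (g := h) (f := Loj.tl) hh (QA.tl hM 0)

lemma QA.comp_emb (hM : Wt M) {h : (Fin (n+1) → ℝ) → ℝ} (hh : QA M h 0) : QA M (fun x : Fin n → ℝ => h (emb x)) 0 :=
  QA.comp hM (g := h) (f := fun x => emb x) (by rw [map_zero]; exact hh) (QA.clm hM emb 0)

lemma emb_tendsto : Tendsto (fun v : Fin n → ℝ => emb v) (𝓝 0) (𝓝 0) := by
  have := (emb (n := n)).continuous.tendsto 0
  rwa [map_zero] at this

lemma mono_cons (β : Fin n → ℕ) (x : Fin (n+1) → ℝ) : mono (Fin.cons 0 β : Fin (n+1) → ℕ) x = mono β (tl x) := by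
  simp [mono, Fin.prod_univ_succ, tl]

lemma Mon.lift (hM : Wt M) {h : (Fin n → ℝ) → ℝ} (hh : Mon M h) : Mon M (fun x : Fin (n+1) → ℝ => h (tl x)) := by
  obtain ⟨β, u, h1, h2, h3⟩ := hh
  refine ⟨Fin.cons 0 β, fun x => u (tl x), h1.comp_tl hM, h2, ?_⟩
  filter_upwards [tl_tendsto.eventually h3] with x hx
  rw [mono_cons, hx]

lemma Ref.lift (hM : Wt M) {y : ℕ → Fin (n+1) → ℝ} (hy : Tendsto y U (𝓝 0)) {z : ℕ → Fin n → ℝ} {p : (Fin n → ℝ) → (Fin n → ℝ)}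
    (h : Ref M U (fun m => tl (y m)) z p) : Ref M U y (fun m => cn (y m 0) (z m)) (fun x => cn (x 0) (p (tl x))) := by
  refine ⟨QA.pi hM fun i => ?_, ?_, ?_, ?_⟩
  · refine Fin.cases ?_ (fun i => ?_) i
    · exact QA.coord hM 0 0
    · exact (QA.comp hM (g := p) (f := tl) (x := (0 : Fin (n+1) → ℝ)) h.qa (QA.tl hM 0)).proj hM i
  · rw [tl_zero, h.z0]; exact cn_00
  · rw [tendsto_pi_nhds] at hy ⊢
    intro i
    refine Fin.cases ?_ (fun i => ?_) i
    · exact hy 0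
    · exact (tendsto_pi_nhds.1 h.lim) i
  · filter_upwards [h.eq] with m hm
    rw [tl_cn, hm, cn_zero, cn_tl]

/-- induction statement -/
def QQ (M : ℕ → ℝ) (n d : ℕ) : Prop := ∀ (U : Ultrafilter ℕ) (y : ℕ → Fin (n+1) → ℝ), Tendsto y U (𝓝 0) →
  ∀ F : (Fin (n+1) → ℝ) → ℝ, QA M F 0 → (dl e0)^[d] F 0 ≠ 0 → ∀ h : (Fin n → ℝ) → ℝ, QA M h 0 → ¬ h =ᶠ[𝓝 0] 0 →
    Good M U y (fun x => h (tl x) * F x)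

lemma core_case (hM : Wt M) {d : ℕ} (hd : 1 ≤ d) (ih : ∀ k < d, QQ M n k) {z : ℕ → Fin (n+1) → ℝ} (hz : Tendsto z U (𝓝 0))
    {H : (Fin n → ℝ) → ℝ} (hH : Mon M H) {β : Fin n → ℕ} (hβ : β ≠ 0) {c : ℕ → (Fin n → ℝ) → ℝ}
    (hc : ∀ i < d, QA M (c i) 0) (hc1 : ∃ i < d, c i 0 ≠ 0) (hc2 : ∀ x, c (d-1) x = 0) {u : (Fin (n+1) → ℝ) → ℝ} (hu : QA M u 0)
    (hu0 : u 0 ≠ 0) :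
    Good M U z (fun x => H (tl x) * (∑ i ∈ Finset.range d, mono ((d - i) • β) (tl x) * c i (tl x) * x 0 ^ i + x 0 ^ d * u x)) := by
  have hβ0 : mono β 0 = 0 := by
    obtain ⟨j, hj⟩ := Function.ne_iff.1 hβ
    exact mono_eq_zero hj rfl
  by_cases hL : ∃ L, ∀ᶠ m in (U : Filter ℕ), |z m 0| ≤ L * |mono β (tl (z m))|
  · obtain ⟨L, hL⟩ := hL
    obtain ⟨s, hs⟩ := exists_lim (U := U) (a := fun m => z m 0 / mono β (tl (z m))) (L := |L|) (by
      filter_upwards [hL] with m hm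
      rw [abs_div]
      refine div_le_of_le_mul₀ (abs_nonneg _) (abs_nonneg _) (hm.trans ?_)
      exact mul_le_mul_of_nonneg_right (le_abs_self L) (abs_nonneg _))
    have htu : ∀ (x : Fin (n+1) → ℝ) (t : ℝ), tl (Function.update x 0 t) = tl x := by
      intro x t; funext i; simp [tl]
    have href := Ref.subst hM hz 0 (q := fun x => mono β (tl x)) ((QA.mono hM β 0).comp_tl hM) (by intro x t; rw [htu])
      (c := s) (by simp [hβ0]) hs (by
        filter_upwards [hL] with m hm h0
        rw [h0] at hm
        simpa using hm)
    set π : (Fin (n+1) → ℝ) → (Fin (n+1) → ℝ) := fun x => Function.update x 0 (mono β (tl x) * (s + x 0)) with hπ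
    have hπ0 : ∀ x, π x 0 = mono β (tl x) * (s + x 0) := by intro x; simp [hπ]
    have hπt : ∀ x, tl (π x) = tl x := fun x => htu _ _
    have hQs : QA M (fun x : Fin (n+1) → ℝ => s + x 0) 0 := (QA.const hM s 0).add hM (QA.coord hM 0 0)
    set F2 : (Fin (n+1) → ℝ) → ℝ := fun x => ∑ i ∈ Finset.range d, c i (tl x) * (s + x 0) ^ i + (s + x 0) ^ d * u (π x) with hF2
    have hF2Q : QA M F2 0 := by
      refine QA.add hM (QA.sum hM _ fun i hi => ?_) ((hQs.pow hM d).mul hM (href.comp_qa hM hu))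
      exact ((hc i (Finset.mem_range.1 hi)).comp_tl hM).mul hM (hQs.pow hM i)
    have hex : ∃ k < d, (dl e0)^[k] F2 0 ≠ 0 := by
      by_contra hcon
      push Not at hcon
      obtain ⟨w, hw, -, hw2⟩ := expansion hM l0 e0 l0_e0 d hF2Q
      have hcont : Tendsto (fun t : ℝ => cn t (0 : Fin n → ℝ)) (𝓝 0) (𝓝 0) := by
        have h1 : Continuous (fun t : ℝ => cn t (0 : Fin n → ℝ)) := by
          refine continuous_pi fun i => ?_
          refine Fin.cases ?_ (fun i => ?_) i
          · exact continuous_id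
          · exact continuous_const
        have := h1.tendsto 0
        rwa [cn_00] at this
      obtain ⟨i, hi, hci⟩ := hc1
      refine hci (poly_contra (a := fun i => c i 0) (c := s) (w := fun t => w (cn t 0)) hu0 hd (hc2 0) ?_ ?_ i hi)
      · have h9 : Tendsto (fun t => w (cn t 0)) (𝓝 0) (𝓝 (w 0)) := Tendsto.comp hw.continuousAt hcont
        rw [← cn_00] at h9
        exact h9
      · filter_upwards [hcont.eventually hw2] with t ht
        have h1 : π (cn t 0) = 0 := by
          refine cn_ext ?_ ?_
          · rw [hπ0, tl_cn, hβ0]; simp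
          · rw [hπt]; rfl
        have h2 : F2 (cn t 0) = ∑ i ∈ Finset.range d, c i 0 * (s + t) ^ i + (s + t) ^ d * u 0 := by
          simp only [hF2, tl_cn, cn_zero, h1]
        rw [← h2, ht, rr_eq, tl_cn, map_zero]
        rw [Finset.sum_eq_zero, zero_add]
        · simp
        · intro k hk
          rw [hcon k (Finset.mem_range.1 hk)]; simp
    obtain ⟨k, hk, hk0⟩ := hex
    refine Good.of_ref hM href ?_
    have hHm : Mon M (fun v => H v * mono (d • β) v) := hH.mul hM (Mon.mono hM _)
    refine (ih k hk U _ href.lim F2 hF2Q hk0 (fun v => H v * mono (d • β) v) (hHm.qa hM) hHm.ne_zero).congr ?_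
    refine Eventually.of_forall fun x => ?_
    simp only [hπt, hπ0]
    rw [mul_assoc]
    congr 1
    simp only [hF2]
    rw [mul_add (mono (d • β) (tl x)), Finset.mul_sum]
    congr 1
    · refine Finset.sum_congr rfl fun i hi => ?_
      have hid := Finset.mem_range.1 hi
      have h3 : d • β = (d - i) • β + i • β := by rw [← add_smul]; congr 1; omega
      rw [h3, mono_add, mul_pow, ← mono_smul]; ring
    · rw [mul_pow, ← mono_smul]; ring
  · have hL' : ∀ L, ∀ᶠ m in (U : Filter ℕ), L * |mono β (tl (z m))| < |z m 0| := by
      intro L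
      by_contra hcon
      rw [← Ultrafilter.eventually_not] at hcon
      exact hL ⟨L, by filter_upwards [hcon] with m hm using not_lt.1 hm⟩
    obtain ⟨w, p, hR, hpM, ρ, hρ, hρ0, hρe⟩ := toric hM (0 : Fin (n+1)) (∑ i, (Fin.cons 0 β : Fin (n+1) → ℕ) i) (β := (Fin.cons 0 β : Fin (n+1) → ℕ)) rfl rfl hz
      (by
        filter_upwards [hL' 0] with m hm
        rw [zero_mul] at hm
        exact abs_pos.1 hm)
      (by
        intro ε hε
        filter_upwards [hL' (1/ε)] with m hm
        rw [mono_cons]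
        rw [one_div, inv_mul_lt_iff₀ hε] at hm
        exact hm.le)
    have hptl : QA M (fun x => tl (p x)) 0 := QA.comp hM (g := tl) (f := p) (QA.tl hM _) hR.qa
    have hptl0 : tl (p 0) = 0 := by rw [hR.z0]; rfl
    have htlp : ∀ {h : (Fin n → ℝ) → ℝ}, QA M h 0 → QA M (fun x => h (tl (p x))) 0 := fun {h} hh =>
      QA.comp hM (g := h) (f := fun x => tl (p x)) (by rw [hptl0]; exact hh) hptl
    refine ⟨w, p, hR, ?_⟩
    have hHp : Mon M (fun x => H (tl (p x))) := by
      obtain ⟨γ, v, h1, h2, h3⟩ := hH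
      have h4 : Mon M (fun x => mono γ (tl (p x))) :=
        Mon.prod hM Finset.univ (F := fun i x => (p x i.succ) ^ γ i) fun i _ => (hpM i.succ).pow hM (γ i)
      refine (h4.mul hM (Mon.unit (htlp h1) (by rw [hptl0]; exact h2))).congr ?_
      filter_upwards [(tl_tendsto.comp hR.tendsto).eventually h3] with x hx using hx
    refine Mon.mul hM hHp ?_
    have hunit : Mon M (fun x => ∑ i ∈ Finset.range d, ρ x ^ (d - i) * c i (tl (p x)) + u (p x)) := by
      refine Mon.unit ?_ ?_
      · refine QA.add hM (QA.sum hM _ fun i hi => ?_) (hR.comp_qa hM hu)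
        exact (hρ.pow hM _).mul hM (htlp (hc i (Finset.mem_range.1 hi)))
      · rw [Finset.sum_eq_zero, zero_add, hR.z0]
        · exact hu0
        · intro i hi
          have : d - i ≠ 0 := by have := Finset.mem_range.1 hi; omega
          rw [hρ0, zero_pow this, zero_mul]
    refine (((hpM 0).pow hM d).mul hM hunit).congr ?_
    filter_upwards [hρe] with x hx
    rw [mono_cons] at hx
    rw [mul_add, Finset.mul_sum]
    congr 1
    refine Finset.sum_congr rfl fun i hi => ?_
    have hid := Finset.mem_range.1 hi
    rw [mono_smul, hx, mul_pow]
    have h3 : p x 0 ^ d = p x 0 ^ (d - i) * p x 0 ^ i := by rw [← pow_add]; congr 1; omega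
    rw [h3]; ring

end Loj


namespace Loj
open Set Filter Topology Metric
open scoped ContDiff Nat

variable {M : ℕ → ℝ} {n : ℕ} {U : Ultrafilter ℕ}

/-- Tschirnhausen-normalized case -/
lemma norm_case (hM : Wt M) (hP : PP M n) {d : ℕ} (hd : 1 ≤ d) (ih : ∀ k < d, QQ M n k) {y : ℕ → Fin (n+1) → ℝ}
    (hy : Tendsto y U (𝓝 0)) {G : (Fin (n+1) → ℝ) → ℝ} (hG : QA M G 0) (hGk : ∀ k < d, (dl e0)^[k] G 0 = 0)
    (hGd : (dl e0)^[d] G 0 ≠ 0) (hG1 : ∀ᶠ v in 𝓝 (0 : Fin n → ℝ), (dl e0)^[d-1] G (emb v) = 0)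
    {h : (Fin n → ℝ) → ℝ} (hh : QA M h 0) (hh0 : ¬ h =ᶠ[𝓝 0] 0) : Good M U y (fun x => h (tl x) * G x) := by
  obtain ⟨u, hu, hu0, hexp⟩ := expansion hM l0 e0 l0_e0 d hG
  have hu0' : u 0 ≠ 0 := by rw [hu0]; exact div_ne_zero hGd (by positivity)
  set a : ℕ → (Fin n → ℝ) → ℝ := fun i v => (dl e0)^[i] G (emb v) / i ! with ha
  have haQ : ∀ i, QA M (a i) 0 := by
    intro i
    have := ((hG.dl_iter hM (e := e0) i).comp_emb hM).mul hM (QA.const hM ((i ! : ℝ)⁻¹) 0)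
    simpa only [ha, div_eq_mul_inv] using this
  have hexp' : G =ᶠ[𝓝 0] fun x => ∑ i ∈ Finset.range d, a i (tl x) * x 0 ^ i + x 0 ^ d * u x := by
    filter_upwards [hexp] with x hx
    rw [hx]
    simp only [ha, rr_eq, l0_apply]
  have hy' : Tendsto (fun m => tl (y m)) U (𝓝 0) := tl_tendsto.comp hy
  by_cases hne : ∃ i < d, ¬ a i =ᶠ[𝓝 0] 0
  · obtain ⟨z, p, hR, hHM, β, c, hβ, hcQ, hc1, hac, hc0⟩ := lemmaS hM hP hy' hh hh0 haQ (fun i hi => by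
      simp only [ha, map_zero, hGk i hi, zero_div]) hne
    have hR' := hR.lift hM hy
    refine Good.of_ref hM hR' ?_
    refine (core_case hM hd ih hR'.lim hHM hβ hcQ hc1 (hc0 (d-1) (by omega) ?_) (hR'.comp_qa hM hu) (by rw [hR'.z0]; exact hu0')).congr ?_
    · filter_upwards [hG1] with v hv
      simp [ha, hv]
    · filter_upwards [hR'.tendsto.eventually hexp', (Finset.eventually_all (Finset.range d)).2
        fun i hi => tl_tendsto.eventually (hac i (Finset.mem_range.1 hi))] with x hx hx2
      rw [hx]
      simp only [tl_cn, cn_zero]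
      congr 2
      refine Finset.sum_congr rfl fun i hi => ?_
      rw [hx2 i hi]
  · push Not at hne
    obtain ⟨z, p, hR, hHM⟩ := hP U _ hy' h hh hh0
    have hR' := hR.lift hM hy
    refine ⟨_, _, hR', ?_⟩
    refine ((hHM.lift hM).mul hM (((Mon.coord hM (0 : Fin (n+1))).pow hM d).mul hM
      (Mon.unit (hR'.comp_qa hM hu) (by rw [hR'.z0]; exact hu0')))).congr ?_
    filter_upwards [hR'.tendsto.eventually hexp', hR'.tendsto.eventually ((Finset.eventually_all (Finset.range d)).2
        fun i hi => tl_tendsto.eventually (hne i (Finset.mem_range.1 hi)))] with x hx hx2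
    rw [hx, Finset.sum_eq_zero, zero_add]
    · simp only [tl_cn, cn_zero]
    · intro i hi
      rw [hx2 i hi]; simp

lemma QQ_all (hM : Wt M) (hP : PP M n) (d : ℕ) : QQ M n d := by
  induction d using Nat.strong_induction_on with
  | _ d ih =>
  intro U y hy F hF hFd h hh hh0
  by_cases hlow : ∃ k < d, (dl e0)^[k] F 0 ≠ 0
  · obtain ⟨k, hk, hk0⟩ := hlow
    exact ih k hk U y hy F hF hk0 h hh hh0
  push Not at hlow
  have hy' : Tendsto (fun m => tl (y m)) U (𝓝 0) := tl_tendsto.comp hy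
  rcases Nat.eq_zero_or_pos d with rfl | hd
  · obtain ⟨z, p, hR, hHM⟩ := hP U _ hy' h hh hh0
    have hR' := hR.lift hM hy
    exact ⟨_, _, hR', (hHM.lift hM).mul hM (Mon.unit (hR'.comp_qa hM hF) (by rw [hR'.z0]; exact hFd))⟩
  set A := (dl e0)^[d-1] F with hA
  have hAQ : QA M A 0 := hF.dl_iter hM (d-1)
  have hAd : dl e0 A = (dl e0)^[d] F := by
    rw [hA, ← Function.iterate_succ_apply' (dl e0) (d-1) F]; congr 1; omega
  obtain ⟨q, hq, hq0, hqA⟩ := implicit hM hAQ (hlow (d-1) (by omega)) (emb (n := n)) e0 (by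
    have := (dl_eq (e := e0) hAQ).eq_of_nhds
    rw [← this, hAd]; exact hFd)
  set T : (Fin (n+1) → ℝ) → (Fin (n+1) → ℝ) := fun x => x + q (tl x) • e0 with hT
  have hTs : ∀ x (s : ℝ), T (x + s • e0) = T x + s • e0 := by
    intro x s
    simp only [hT, tl_add_smul]
    abel
  have hTt : ∀ x, tl (T x) = tl x := fun x => tl_add_smul _ _
  have hTQ : QA M T 0 := by
    refine QA.pi hM fun i => ?_
    exact (QA.coord hM i 0).add hM ((hq.comp_tl hM).mul hM (QA.const hM ((e0 : Fin (n+1) → ℝ) i) 0))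
  have hT0 : T 0 = 0 := by simp only [hT, tl_zero, hq0, zero_smul, add_zero]
  have hR : Ref M U y (fun m => y m - q (tl (y m)) • e0) T := by
    have h1 : ∀ x : Fin (n+1) → ℝ, tl (x - q (tl x) • e0) = tl x := by
      intro x; rw [sub_eq_add_neg, ← neg_smul, tl_add_smul]
    refine ⟨hTQ, hT0, ?_, Eventually.of_forall fun m => ?_⟩
    · have h2 : Tendsto (fun m => q (tl (y m))) U (𝓝 (q 0)) := Tendsto.comp hq.continuousAt hy'
      have h3 := hy.sub (h2.smul_const (e0 : Fin (n+1) → ℝ))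
      rw [hq0] at h3
      simpa using h3
    · simp only [hT, h1, sub_add_cancel]
  refine Good.of_ref hM hR ?_
  simp only [hTt]
  have hdl : ∀ k, (dl e0)^[k] (fun x => F (T x)) = fun x => (dl e0)^[k] F (T x) := fun k => dl_comp_iter hTs F k
  refine norm_case hM hP hd ih hR.lim (hR.comp_qa hM hF) ?_ ?_ ?_ hh hh0
  · intro k hk
    rw [hdl]; show (dl e0)^[k] F (T 0) = 0
    rw [hT0]; exact hlow k hk
  · rw [hdl]; show (dl e0)^[d] F (T 0) ≠ 0
    rw [hT0]; exact hFd
  · filter_upwards [hqA] with v hv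
    rw [hdl]
    simp only [hT, emb_apply, tl_cn]
    rw [emb_apply] at hv
    exact hv

lemma PP_all (hM : Wt M) (n : ℕ) : PP M n := by
  induction n with
  | zero =>
    intro U y hy F hF hF0
    refine Good.of_mon hM hy (Mon.unit hF fun h0 => hF0 (Eventually.of_forall fun x => ?_))
    rw [Subsingleton.elim x 0]; exact h0
  | succ n ihn =>
    intro U y hy F hF hF0
    by_cases hF00 : F 0 = 0
    swap
    · exact Good.of_mon hM hy (Mon.unit hF hF00)
    obtain ⟨r, hr, A, B, hA, hB, hQB⟩ := hF.ball
    obtain ⟨p, hp, hpF⟩ : ∃ p ∈ Metric.ball (0 : Fin (n+1) → ℝ) r, F p ≠ 0 := by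
      by_contra hcon
      push Not at hcon
      exact hF0 (by filter_upwards [Metric.ball_mem_nhds _ hr] with x hx using hcon x hx)
    have hp0 : p ≠ 0 := by rintro rfl; exact hpF hF00
    obtain ⟨k, hk⟩ : ∃ k, iteratedFDeriv ℝ k F 0 (fun _ => p) ≠ 0 := by
      by_contra hcon
      push Not at hcon
      refine hpF (QB.eq_zero_of_flat hM Metric.isOpen_ball (convex_ball _ _) hA hB hQB (Metric.mem_ball_self hr) hp ?_)
      intro k
      simpa using hcon k
    obtain ⟨L, hL⟩ := SeparatingDual.exists_continuousLinearEquiv_apply_eq (R := ℝ) (x := (e0 : Fin (n+1) → ℝ)) (y := p)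
      (by intro h; have := congrFun h 0; simp [e0] at this) hp0
    have hR : Ref M U y (fun m => L.symm (y m)) (fun x => L x) := by
      refine ⟨QA.clm hM (L : (Fin (n+1) → ℝ) →L[ℝ] (Fin (n+1) → ℝ)) 0, map_zero L, ?_, Eventually.of_forall fun m => by simp⟩
      have := (L.symm.continuous.tendsto 0).comp hy
      rwa [map_zero] at this
    refine Good.of_ref hM hR ?_
    have hdl : (dl e0)^[k] (fun x => F (L x)) = fun x => (dl p)^[k] F (L x) :=
      dl_comp_iter (T := fun x => L x) (by intro x s; rw [map_add, map_smul, hL]) F k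
    have := QQ_all hM ihn k U _ hR.lim (fun x => F (L x)) (hR.comp_qa hM hF) (by
      rw [hdl]; show (dl p)^[k] F (L 0) ≠ 0
      rw [map_zero, (dl_iter_eq hF k).eq_of_nhds]; exact hk) (fun _ => 1) (QA.const hM 1 0) (by
      intro h
      have := h.eq_of_nhds
      simp at this)
    simpa using this

end Loj


namespace Loj
open Set Filter Topology Metric
open scoped ContDiff Nat

variable {M : ℕ → ℝ} {N : ℕ}

/-- iterated partial derivatives along a list of directions -/
noncomputable def pdl (l : List (Fin N)) (f : EuclideanSpace ℝ (Fin N) → ℝ) : EuclideanSpace ℝ (Fin N) → ℝ :=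
  l.foldr pd f

lemma pd_congr {f g : EuclideanSpace ℝ (Fin N) → ℝ} {U : Set (EuclideanSpace ℝ (Fin N))} (hU : IsOpen U) (h : EqOn f g U) (i : Fin N) :
    EqOn (pd i f) (pd i g) U := by
  intro x hx
  have : f =ᶠ[𝓝 x] g := by filter_upwards [hU.mem_nhds hx] with y hy using h hy
  simp only [pd, this.fderiv_eq]

lemma pd_smooth {f : EuclideanSpace ℝ (Fin N) → ℝ} {U : Set (EuclideanSpace ℝ (Fin N))} (hU : IsOpen U) (h : ContDiffOn ℝ ∞ f U) (i : Fin N) :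
    ContDiffOn ℝ ∞ (pd i f) U := by
  have h1 : ContDiffOn ℝ ∞ (_root_.fderiv ℝ f) U := h.fderiv_of_isOpen hU (by simp)
  exact h1.clm_apply contDiffOn_const

lemma pdl_smooth {f : EuclideanSpace ℝ (Fin N) → ℝ} {U : Set (EuclideanSpace ℝ (Fin N))} (hU : IsOpen U) (h : ContDiffOn ℝ ∞ f U) (l : List (Fin N)) :
    ContDiffOn ℝ ∞ (pdl l f) U := by
  induction l with
  | nil => exact h
  | cons i l ih => exact pd_smooth hU ih i

lemma pd_pd {f : EuclideanSpace ℝ (Fin N) → ℝ} {U : Set (EuclideanSpace ℝ (Fin N))} (hU : IsOpen U) (h : ContDiffOn ℝ ∞ f U) (i j : Fin N) :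
    EqOn (pd i (pd j f)) (pd j (pd i f)) U := by
  intro x hx
  have hc : ContDiffAt ℝ ∞ f x := h.contDiffAt (hU.mem_nhds hx)
  have hs : IsSymmSndFDerivAt ℝ f x := hc.isSymmSndFDerivAt (by simp only [minSmoothness_of_isRCLikeNormedField]; exact WithTop.coe_le_coe.2 (le_top : (2:ℕ∞) ≤ ⊤))
  have hd : DifferentiableAt ℝ (_root_.fderiv ℝ f) x :=
    (hc.fderiv_right (m := 1) (by norm_cast)).differentiableAt (by simp)
  have h1 : ∀ i j : Fin N, pd i (pd j f) x = _root_.fderiv ℝ (_root_.fderiv ℝ f) x (EuclideanSpace.single i 1) (EuclideanSpace.single j 1) := by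
    intro i j
    have : pd i (pd j f) x = _root_.fderiv ℝ (fun y => _root_.fderiv ℝ f y (EuclideanSpace.single j 1)) x (EuclideanSpace.single i 1) := rfl
    rw [this, fderiv_clm_apply hd (differentiableAt_const _)]
    simp
  rw [h1, h1]
  exact hs _ _

lemma pdl_perm {f : EuclideanSpace ℝ (Fin N) → ℝ} {U : Set (EuclideanSpace ℝ (Fin N))} (hU : IsOpen U) (h : ContDiffOn ℝ ∞ f U)
    {l l' : List (Fin N)} (hl : l.Perm l') : EqOn (pdl l f) (pdl l' f) U := by
  induction hl with
  | nil => exact fun _ _ => rfl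
  | cons i _ ih => exact pd_congr hU ih i
  | swap i j l => exact pd_pd hU (pdl_smooth hU h l) j i
  | trans _ _ h1 h2 => exact h1.trans h2

lemma iter_pdl {f : EuclideanSpace ℝ (Fin N) → ℝ} {U : Set (EuclideanSpace ℝ (Fin N))} (hU : IsOpen U) (h : ContDiffOn ℝ ∞ f U)
    (n : ℕ) : ∀ (r : Fin n → Fin N), ∀ x ∈ U, iteratedFDeriv ℝ n f x (fun i => EuclideanSpace.single (r i) 1) = pdl (List.ofFn r) f x := by
  induction n with
  | zero => intro r x hx; simp [pdl]
  | succ n ih =>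
    intro r x hx
    rw [iteratedFDeriv_succ_apply_left, List.ofFn_succ]
    have hc : ContDiffAt ℝ ∞ f x := h.contDiffAt (hU.mem_nhds hx)
    have hd : DifferentiableAt ℝ (iteratedFDeriv ℝ n f) x := hc.differentiableAt_iteratedFDeriv (by exact_mod_cast ENat.natCast_lt_top n)
    have h2 : _root_.fderiv ℝ (fun y => iteratedFDeriv ℝ n f y (fun i => EuclideanSpace.single (r i.succ) 1)) x =
        _root_.fderiv ℝ (pdl (List.ofFn fun i => r i.succ) f) x := by
      refine Filter.EventuallyEq.fderiv_eq ?_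
      filter_upwards [hU.mem_nhds hx] with y hy using ih _ y hy
    have h3 : pdl (r 0 :: List.ofFn fun i => r i.succ) f x =
      _root_.fderiv ℝ (pdl (List.ofFn fun i => r i.succ) f) x (EuclideanSpace.single (r 0) 1) := rfl
    rw [h3, ← h2]
    have h4 := ((ContinuousMultilinearMap.apply ℝ (fun _ : Fin n => EuclideanSpace ℝ (Fin N)) ℝ
      (fun i => EuclideanSpace.single (r i.succ) 1)).hasFDerivAt.comp x hd.hasFDerivAt).fderiv
    have h5 : (⇑(ContinuousMultilinearMap.apply ℝ (fun _ : Fin n => EuclideanSpace ℝ (Fin N)) ℝ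
      (fun i => EuclideanSpace.single (r i.succ) 1)) ∘ iteratedFDeriv ℝ n f) = fun y => iteratedFDeriv ℝ n f y (fun i => EuclideanSpace.single (r i.succ) 1) := rfl
    rw [h5] at h4
    rw [h4]
    rfl

lemma mderiv_pdl (α : Fin N → ℕ) (f : EuclideanSpace ℝ (Fin N) → ℝ) :
    mderiv α f = pdl ((Finset.univ : Finset (Fin N)).toList.flatMap fun i => List.replicate (α i) i) f := by
  unfold mderiv
  generalize (Finset.univ : Finset (Fin N)).toList = l
  induction l with
  | nil => rfl
  | cons i l ih =>
    rw [List.foldr_cons, ih, List.flatMap_cons]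
    unfold pdl
    rw [List.foldr_append]
    generalize List.foldr pd f _ = g
    generalize α i = k
    induction k with
    | zero => rfl
    | succ k ihk => rw [Function.iterate_succ_apply', ihk, List.replicate_succ, List.foldr_cons]

lemma perm_aux {l : List (Fin N)} : l.Perm ((Finset.univ : Finset (Fin N)).toList.flatMap fun i => List.replicate (l.count i) i) := by
  rw [List.perm_iff_count]
  intro a
  rw [List.count_flatMap]
  have : ((Finset.univ : Finset (Fin N)).toList.map (List.count a ∘ fun i => List.replicate (l.count i) i)).sum
      = ∑ i : Fin N, (List.count a (List.replicate (l.count i) i)) := by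
    rw [← Finset.sum_map_toList]; rfl
  rw [this]
  simp [List.count_replicate]

lemma sum_count {l : List (Fin N)} : ∑ i, l.count i = l.length := by
  rw [(perm_aux (l := l)).length_eq, List.length_flatMap]
  have : ((Finset.univ : Finset (Fin N)).toList.map fun i => (List.replicate (l.count i) i).length).sum
      = ∑ i : Fin N, (List.replicate (l.count i) i).length := by
    rw [← Finset.sum_map_toList]
  rw [this]
  simp

lemma CRM.qa (hM : Wt M) {U : Set (EuclideanSpace ℝ (Fin N))} (hU : IsOpen U) {f : EuclideanSpace ℝ (Fin N) → ℝ} (hf : CRM M U f)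
    {a : EuclideanSpace ℝ (Fin N)} (ha : a ∈ U) : QA M f a := by
  obtain ⟨hs, hb⟩ := hf
  obtain ⟨r, hr, hrU⟩ := Metric.nhds_basis_closedBall.mem_iff.1 (hU.mem_nhds ha)
  obtain ⟨A, B, hA, hB, hAB⟩ := hb _ hrU (isCompact_closedBall a r)
  have hsub : Metric.ball a r ⊆ U := Metric.ball_subset_closedBall.trans hrU
  have hs' : ContDiffOn ℝ ∞ f U := hs
  refine ⟨Metric.ball a r, Metric.isOpen_ball, Metric.mem_ball_self hr, A, max 1 (N * B), hA.le, le_max_left _ _,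
    hs'.mono hsub, fun n x hx => ?_⟩
  have hMn := hM.pos n
  have key : ∀ s : Fin n → Fin N, |iteratedFDeriv ℝ n f x (fun i => EuclideanSpace.single (s i) 1)| ≤ A * B ^ n * (n ! * M n) := by
    intro s
    rw [iter_pdl hU hs' n s x (hsub hx), pdl_perm hU hs' (perm_aux (l := List.ofFn s)) (hsub hx),
      ← mderiv_pdl (fun i => (List.ofFn s).count i) f]
    have h1 := hAB x (Metric.ball_subset_closedBall hx) (fun i => (List.ofFn s).count i)
    have h2 : ∑ i, (List.ofFn s).count i = n := by rw [sum_count, List.length_ofFn]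
    rw [h2] at h1
    set P : ℝ := ∏ i, (((List.ofFn s).count i) ! : ℝ) with hP
    have hP0 : 0 < P := Finset.prod_pos fun i _ => by positivity
    have hPn : P ≤ n ! := by
      have h3 := Nat.le_of_dvd (Nat.factorial_pos _) (Nat.prod_factorial_dvd_factorial_sum Finset.univ (fun i => (List.ofFn s).count i))
      rw [h2] at h3
      rw [hP]; exact_mod_cast h3
    rw [one_div, inv_mul_le_iff₀ hP0] at h1
    refine h1.trans ?_
    calc P * (A * B ^ n * M n) ≤ n ! * (A * B ^ n * M n) := by gcongr
      _ = A * B ^ n * (n ! * M n) := by ring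
  set C := A * B ^ n * (n ! * M n) with hC
  have hC0 : 0 ≤ C := by positivity
  have hle : ‖iteratedFDeriv ℝ n f x‖ ≤ N ^ n * C := by
    refine ContinuousMultilinearMap.opNorm_le_bound (by positivity) fun v => ?_
    have hv : v = fun i => ∑ j, (v i j) • (EuclideanSpace.single j 1 : EuclideanSpace ℝ (Fin N)) := by
      funext i
      ext k
      simp [Finset.sum_apply, Pi.single_apply]
    conv_lhs => rw [hv]
    rw [ContinuousMultilinearMap.map_sum]
    refine (norm_sum_le _ _).trans ?_
    have h6 : ∀ s ∈ (Finset.univ : Finset (Fin n → Fin N)),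
        ‖iteratedFDeriv ℝ n f x (fun i => (v i (s i)) • (EuclideanSpace.single (s i) 1 : EuclideanSpace ℝ (Fin N)))‖ ≤ C * ∏ i, ‖v i‖ := by
      intro s _
      rw [ContinuousMultilinearMap.map_smul_univ, norm_smul, mul_comm C]
      refine mul_le_mul ?_ (key s) (norm_nonneg _) (by positivity)
      rw [norm_prod]
      exact Finset.prod_le_prod (fun i _ => norm_nonneg _) fun i _ => PiLp.norm_apply_le _ _
    refine (Finset.sum_le_sum h6).trans (le_of_eq ?_)
    simp
    ring
  refine hle.trans ?_
  have : (N:ℝ) ^ n * C = A * (N * B) ^ n * (n ! * M n) := by rw [hC, mul_pow]; ring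
  rw [this]
  gcongr
  exact le_max_right _ _

end Loj


namespace Loj
open Set Filter Topology Metric
open scoped ContDiff Nat

variable {M : ℕ → ℝ} {n N : ℕ} {U : Ultrafilter ℕ}

lemma local_loj (hM : Wt M) {f g : (Fin n → ℝ) → ℝ} (hf : QA M f 0) (hg : QA M g 0)
    (hincl : ∀ᶠ x in 𝓝 (0 : Fin n → ℝ), g x = 0 → f x = 0) {y : ℕ → Fin n → ℝ} (hy : Tendsto y U (𝓝 0)) :
    ∃ (p : ℕ) (C : ℝ), ∀ᶠ m in (U : Filter ℕ), |f (y m)| ^ p ≤ C * |g (y m)| := by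
  by_cases hf0 : f =ᶠ[𝓝 0] 0
  · refine ⟨1, 1, ?_⟩
    filter_upwards [hy.eventually hf0] with m hm
    rw [hm]; simp
  have hg0 : ¬ g =ᶠ[𝓝 0] 0 := by
    intro h
    refine hf0 ?_
    filter_upwards [h, hincl] with x h1 h2 using h2 h1
  obtain ⟨z, π, hR, hMon⟩ := PP_all hM n U y hy (fun x => f x * g x) (hf.mul hM hg) (by
    intro h
    rcases QA.mul_eq_zero hM hf hg h with h | h
    · exact hf0 h
    · exact hg0 h)
  obtain ⟨⟨β, u, hu, hu0, hfe⟩, ⟨γ, v, hv, hv0, hge⟩⟩ := Mon.factor hM (hR.comp_qa hM hf) (hR.comp_qa hM hg) hMon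
  have hsupp : ∀ j, γ j ≠ 0 → β j ≠ 0 := by
    intro j hj hβ
    obtain ⟨δ, hδ, hx⟩ := exists_pos (((hfe.and hge).and (hR.tendsto.eventually hincl)).and (hu.continuousAt.eventually_ne hu0))
    obtain ⟨⟨⟨h1, h2⟩, h3⟩, h4⟩ := hx (Function.update (fun _ => δ) j 0) (by
      intro k
      by_cases h : k = j
      · subst h; simp [hδ.le]
      · simp [h, abs_of_pos hδ])
    beta_reduce at h1 h2
    have h5 := h3 (by rw [h2, mono_eq_zero hj (by simp), zero_mul])
    rw [h1, mono_update hβ] at h5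
    exact mul_ne_zero (mono_ne_zero β fun _ => hδ.ne') h4 h5
  set p := ∑ j, γ j with hp
  have hle : γ ≤ p • β := by
    intro j
    by_cases h : γ j = 0
    · rw [h]; exact Nat.zero_le _
    · have h1 : γ j ≤ p := Finset.single_le_sum (f := γ) (fun _ _ => Nat.zero_le _) (Finset.mem_univ j)
      have h2 := Nat.pos_of_ne_zero (hsupp j h)
      simp only [Pi.smul_apply, smul_eq_mul]
      nlinarith
  set w : (Fin n → ℝ) → ℝ := fun x => mono (p • β - γ) x * u x ^ p / v x with hw
  have hwc : ContinuousAt w 0 := ((QA.mono hM _ 0).continuousAt.mul (hu.continuousAt.pow p)).div hv.continuousAt hv0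
  refine ⟨p, |w 0| + 1, ?_⟩
  have hev : ∀ᶠ x in 𝓝 (0 : Fin n → ℝ), |f (π x)| ^ p ≤ (|w 0| + 1) * |g (π x)| := by
    filter_upwards [hfe, hge, hwc.abs.eventually_lt_const (lt_add_one |w 0|), hv.continuousAt.eventually_ne hv0] with x h1 h2 h3 h4
    have h5 : f (π x) ^ p = w x * g (π x) := by
      rw [h1, h2, mul_pow, ← mono_smul]
      have : p • β = γ + (p • β - γ) := (add_tsub_cancel_of_le hle).symm
      conv_lhs => rw [this, mono_add]
      simp only [hw]
      field_simp
    rw [← abs_pow, h5, abs_mul]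
    exact mul_le_mul_of_nonneg_right h3.le (abs_nonneg _)
  filter_upwards [hR.lim.eventually hev, hR.eq] with m h1 h2
  rw [h2] at h1
  exact h1

end Loj

open Set Filter Topology Metric in
/-- Łojasiewicz inequality I in the class `C^ℝ_M`. -/
theorem stmt11 {N : ℕ} (M : ℕ → ℝ)
    (hpos : ∀ j, 0 < M j) (hmono : Monotone M) (hM0 : M 0 = 1)
    (hlog : ∀ j : ℕ, M (j+1) / M j ≤ M (j+2) / M (j+1))
    (hqa : ∑' k : ℕ, ENNReal.ofReal (M k / (((k : ℝ) + 1) * M (k+1))) = ⊤)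
    (hder : ∃ C : ℝ, ∀ j : ℕ, 1 ≤ j → (M (j+1) / M j) ^ ((1 : ℝ) / j) ≤ C)
    (U : Set (EuclideanSpace ℝ (Fin N))) (hUopen : IsOpen U) (hUconn : IsConnected U)
    (f g : EuclideanSpace ℝ (Fin N) → ℝ) (hf : CRM M U f) (hg : CRM M U g)
    (K : Set (EuclideanSpace ℝ (Fin N))) (hKcpt : IsCompact K) (hKU : K ⊆ U)
    (hincl : ∃ W₀ : Set (EuclideanSpace ℝ (Fin N)), IsOpen W₀ ∧ K ⊆ W₀ ∧ W₀ ⊆ U ∧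
      ∀ x ∈ W₀, g x = 0 → f x = 0) :
    ∃ C : ℝ, 0 < C ∧ ∃ α : ℚ, 0 < α ∧
      ∃ W : Set (EuclideanSpace ℝ (Fin N)), IsOpen W ∧ K ⊆ W ∧ W ⊆ U ∧
        ∀ x ∈ W, C * |f x| ^ (α : ℝ) ≤ |g x| := by
  have hM : Loj.Wt M := ⟨hpos, hmono, hM0, hlog, hqa, hder⟩
  obtain ⟨W₀, hW₀, hKW, hWU, hW⟩ := hincl
  by_contra hcon
  have hx : ∀ m : ℕ, ∃ x : EuclideanSpace ℝ (Fin N), ∃ k ∈ K, dist x k < 1 / ((m : ℝ) + 1) ∧ x ∈ U ∧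
      |g x| < 1 / ((m : ℝ) + 1) ^ (m + 2) * |f x| ^ (m + 1) := by
    intro m
    by_contra hx
    push Not at hx
    refine hcon ⟨1 / ((m : ℝ) + 1) ^ (m + 2), by positivity, ((m + 1 : ℕ) : ℚ), by positivity,
      thickening (1 / ((m : ℝ) + 1)) K ∩ U, isOpen_thickening.inter hUopen,
      subset_inter (self_subset_thickening (by positivity) K) hKU, inter_subset_right, ?_⟩
    rintro x ⟨h1, h2⟩
    obtain ⟨k, hk, hd⟩ := mem_thickening_iff.1 h1
    have := hx x k hk hd h2
    rw [Rat.cast_natCast, Real.rpow_natCast]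
    exact this
  choose x k hk hd hxU hxg using hx
  set V : Ultrafilter ℕ := hyperfilter ℕ with hV
  have hVt : (V : Filter ℕ) ≤ atTop := by rw [← Nat.cofinite_eq_atTop]; exact hyperfilter_le_cofinite
  obtain ⟨a, haK, hka⟩ := hKcpt.ultrafilter_le_nhds (V.map k) (by
    rw [le_principal_iff]
    show k ⁻¹' K ∈ (V : Filter ℕ)
    exact Eventually.of_forall hk)
  have hka' : Tendsto k V (𝓝 a) := hka
  have h1m : Tendsto (fun m : ℕ => 1 / ((m : ℝ) + 1)) V (𝓝 0) := tendsto_one_div_add_atTop_nhds_zero_nat.mono_left hVt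
  have hxa : Tendsto x V (𝓝 a) := by
    refine (tendsto_iff_of_dist ?_).2 hka'
    exact squeeze_zero (fun _ => dist_nonneg) (fun m => (hd m).le) h1m
  have hfa : Loj.QA M f a := Loj.CRM.qa hM hUopen hf (hKU haK)
  have hga : Loj.QA M g a := Loj.CRM.qa hM hUopen hg (hKU haK)
  have hfx : Tendsto (fun m => f (x m)) V (𝓝 (f a)) := Tendsto.comp hfa.continuousAt hxa
  have hgx : Tendsto (fun m => g (x m)) V (𝓝 (g a)) := Tendsto.comp hga.continuousAt hxa
  have hbig : ∀ R : ℝ, ∀ᶠ m : ℕ in (V : Filter ℕ), R < (m : ℝ) + 1 := by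
    intro R
    refine hVt ?_
    filter_upwards [eventually_gt_atTop ⌈R⌉₊] with m hm
    have := Nat.lt_of_ceil_lt hm
    linarith
  by_cases hfa0 : f a = 0
  · set L : (Fin N → ℝ) →L[ℝ] EuclideanSpace ℝ (Fin N) := ((EuclideanSpace.equiv (Fin N) ℝ).symm : (Fin N → ℝ) →L[ℝ] EuclideanSpace ℝ (Fin N)) with hL
    set T : (Fin N → ℝ) → EuclideanSpace ℝ (Fin N) := fun v => a + L v with hT
    have hT0 : T 0 = a := by simp [hT]
    have hTQ : Loj.QA M T 0 := (Loj.QA.const hM a 0).add hM (Loj.QA.clm hM L 0)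
    have hTc : Tendsto T (𝓝 0) (𝓝 a) := by
      have := hTQ.continuousAt
      unfold ContinuousAt at this
      rwa [hT0] at this
    set y : ℕ → Fin N → ℝ := fun m => EuclideanSpace.equiv (Fin N) ℝ (x m - a) with hy
    have hyT : ∀ m, T (y m) = x m := by
      intro m
      show a + (EuclideanSpace.equiv (Fin N) ℝ).symm (EuclideanSpace.equiv (Fin N) ℝ (x m - a)) = x m
      rw [ContinuousLinearEquiv.symm_apply_apply, add_sub_cancel]
    have hyl : Tendsto y V (𝓝 0) := by
      have h1 : Tendsto (fun m => x m - a) V (𝓝 0) := by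
        have := hxa.sub_const a
        rwa [sub_self] at this
      have h2 := ((EuclideanSpace.equiv (Fin N) ℝ).continuous.tendsto 0).comp h1
      rw [map_zero] at h2
      exact h2
    obtain ⟨p, C, hpC⟩ := Loj.local_loj hM (f := fun v => f (T v)) (g := fun v => g (T v))
      (Loj.QA.comp hM (g := f) (f := T) (by rw [hT0]; exact hfa) hTQ)
      (Loj.QA.comp hM (g := g) (f := T) (by rw [hT0]; exact hga) hTQ)
      (hTc.eventually (by filter_upwards [hW₀.mem_nhds (hKW haK)] with z hz using hW z hz)) hyl
    have hf1 : ∀ᶠ m in (V : Filter ℕ), |f (x m)| < 1 := by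
      have := hfx.abs
      rw [hfa0, abs_zero] at this
      exact this.eventually_lt_const one_pos
    obtain ⟨m, h1, h2, h3, h4, h5⟩ := (hpC.and (hf1.and ((hbig p).and ((hbig (|C|)).and (hbig 0))))).exists
    rw [hyT] at h1
    have h6 := hxg m
    have hf0 : 0 < |f (x m)| := by
      by_contra h0
      have h7 : |f (x m)| = 0 := le_antisymm (not_lt.1 h0) (abs_nonneg _)
      rw [h7, zero_pow (by omega), mul_zero] at h6
      exact absurd h6 (not_lt.2 (abs_nonneg _))
    have hpm : p ≤ m + 1 := by
      have : (p : ℝ) ≤ ((m + 1 : ℕ) : ℝ) := by push_cast; exact h3.le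
      exact_mod_cast this
    have h8 : |f (x m)| ^ (m + 1) ≤ |f (x m)| ^ p := pow_le_pow_of_le_one (abs_nonneg _) h2.le hpm
    have hm1 : (1:ℝ) ≤ (m:ℝ) + 1 := by have : (0:ℝ) ≤ m := Nat.cast_nonneg m; linarith
    have h9 : 1 / ((m : ℝ) + 1) ^ (m + 2) ≤ 1 / ((m : ℝ) + 1) :=
      one_div_le_one_div_of_le h5 (le_self_pow₀ hm1 (by omega))
    have h10 : |g (x m)| ≤ 1 / ((m : ℝ) + 1) * |f (x m)| ^ p :=
      h6.le.trans (mul_le_mul h9 h8 (by positivity) (by positivity))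
    have h11 : |f (x m)| ^ p ≤ |C| * (1 / ((m : ℝ) + 1) * |f (x m)| ^ p) :=
      h1.trans ((mul_le_mul_of_nonneg_right (le_abs_self C) (abs_nonneg _)).trans (mul_le_mul_of_nonneg_left h10 (abs_nonneg _)))
    have h12 : 0 < |f (x m)| ^ p := pow_pos hf0 p
    have h13 : |C| * (1 / ((m : ℝ) + 1)) < 1 := by rw [mul_one_div, div_lt_one h5]; exact h4
    rw [← mul_assoc] at h11
    have := mul_lt_mul_of_pos_right h13 h12
    linarith
  · have hga0 : g a ≠ 0 := fun h => hfa0 (hW a (hKW haK) h)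
    have hg1 : ∀ᶠ m in (V : Filter ℕ), |g a| / 2 < |g (x m)| :=
      hgx.abs.eventually_const_lt (half_lt_self (abs_pos.2 hga0))
    have hf1 : ∀ᶠ m in (V : Filter ℕ), |f (x m)| < |f a| + 1 := hfx.abs.eventually_lt_const (lt_add_one _)
    have hs : ∀ᶠ m : ℕ in (V : Filter ℕ), 1 / ((m : ℝ) + 1) < |g a| / 2 := h1m.eventually_lt_const (by positivity)
    obtain ⟨m, h1, h2, h3, h4⟩ := (hg1.and (hf1.and (hs.and (hbig (|f a| + 1))))).exists
    have h6 := hxg m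
    have h5 : (0:ℝ) < (m:ℝ) + 1 := by positivity
    have h7 : |f (x m)| ^ (m + 1) ≤ ((m:ℝ) + 1) ^ (m + 1) := pow_le_pow_left₀ (abs_nonneg _) (by linarith) _
    have h8 : 1 / ((m : ℝ) + 1) ^ (m + 2) * |f (x m)| ^ (m + 1) ≤ 1 / ((m : ℝ) + 1) ^ (m + 2) * ((m:ℝ) + 1) ^ (m + 1) :=
      mul_le_mul_of_nonneg_left h7 (by positivity)
    have h9 : 1 / ((m : ℝ) + 1) ^ (m + 2) * ((m:ℝ) + 1) ^ (m + 1) = 1 / ((m : ℝ) + 1) := by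
      rw [pow_succ ((m:ℝ) + 1) (m + 1)]; field_simp
    linarith
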